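/- arXiv:2505.07645 — 3 statements merged into one kernel-verified Lean document; each statement's English description precedes it below -/
import Mathlib

section
/- Let K be an algebraically closed field, let n ≥ 4, and let F ∈ K[x_0,…,x_n] be a cubic form whose zero locus X = V(F) ⊂ P^n is smooth. Let W ⊆ K^{n+1} be a 2-dimensional linear subspace on which F vanishes identically (i.e. a line L ⊂ X). Then there exists a nonzero linear form h ∈ K[x_0,…,x_n] vanishing identically on W such that the hyperplane section X ∩ V(h) is smooth, i.e. for every nonzero v ∈ K^{n+1} with F(v) = 0 and h(v) = 0, the gradient ∇F(v) is not a scalar multiple of the coefficient vector of h. -/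
/-!
Choose coordinates `(s, t, y)`, with `y` in `K^m` and `m = n - 1`, such that `W` is `y = 0`. Then
`F = s² l₁ + s t l₂ + t² l₃ + s q₁ + t q₂ + c` with `lᵢ, qᵢ, c` forms of degrees 1, 2, 3 in `y`
(`exists_fam_of_vanish`). A hyperplane containing the line is given by a linear form `η(y)`, and at a
singular point of its section `∂F/∂s = ∂F/∂t = 0` and `∂F/∂y` is proportional to `η`.

Suppose that every `η ≠ 0` gives a singular section. After rescaling, the map `∂F/∂y` from the cone
`Z = V(F, ∂F/∂s, ∂F/∂t)` to `K^m` is onto, so some irreducible component of `Z` has dimension at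
least `m` (`exists_generic`). Let `D` be its coordinate ring, `s, t ∈ D` the classes of the two line
coordinates and `f : K[y] → D` the natural map; `D` is generated by `s, t` over the image of `f`
(`GenericPoint`). Every case below produces a singular point of `X`, mostly through
`false_of_mem_sq`: if `F` lies in the square of an ideal generated by fewer than `m + 2` polynomials
without constant term, then these have a common nonzero zero, at which `F` is singular.

* If `δ = 4 l₁ l₃ - l₂²` is nonzero in `D`, Cramer's rule makes `s, t` rational functions of `y`, so
  `f` is injective and the formula for `(s, t)` gives a section of `Z` over `δ ≠ 0`. Differentiating
  the identity `F(s(y), t(y), y) = 0` shows that `∂F/∂y` vanishes along it as well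
  (`SmoothData.disc_eq_zero`).
* If `f l₁ = f l₃ = 0`, then all six forms lie in `ker f`, whose height is at most two. As the `lᵢ`
  cannot all be multiples of one linear form (`SmoothData.net`), `ker f` is generated by two linear
  forms, and `F` is in the square of an ideal with four generators (`SmoothData.not_all_mem`).
* Otherwise `s` or `t` is quadratic over the rest and `ker f` has height at most one. In
  characteristic 2, `l₂`, `q₁`, `q₂` lie in `ker f` and hence have a common factor `r`; a common zero
  of `r` and of the `m` polynomials `∂F/∂y` is a singular point, Euler's relation `3 F = 0` giving
  `F = 0` (`SmoothData.char_two`).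
* In the remaining case `ker f = (r)` with `r` a prime factor of `δ ≠ 0`, homogeneous of degree 1 or
  2. Modulo `r` the quadratic polynomial `F` in `s, t` is degenerate, and completing the square
  gives `F = l₁ (s + b t + a)² + r e` in degree 1 (`rank_one_false`) and
  `F = l₁ (s + a)² + l₂ (s + a)(t + b) + l₃ (t + b)² + δ n` in degree 2 (`rank_two_false`).
-/

open MvPolynomial

/-! ### Common zeros and dimension theory -/

/-- The maximal ideal of the origin in `K[x_σ]` has height `card σ`: some maximal ideal does, it is
the ideal of a point by the Nullstellensatz, and translations act transitively on points. -/
lemma height_vanishing_zero {K : Type} [Field K] [IsAlgClosed K] {σ : Type} [Fintype σ] :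
    ((Fintype.card σ : ℕ) : ℕ∞) ≤
      (vanishingIdeal K ({0} : Set (σ → K)) : Ideal (MvPolynomial σ K)).height := by
  have hdim : ringKrullDim (MvPolynomial σ K) = (Fintype.card σ : ℕ) := by
    rw [MvPolynomial.ringKrullDim_of_isNoetherianRing, ringKrullDim_eq_zero_of_field]
    simp
  have : FiniteRingKrullDim (MvPolynomial σ K) := by
    rw [finiteRingKrullDim_iff_ne_bot_and_top, hdim]
    exact ⟨WithBot.coe_ne_bot, by
      intro h
      have := WithBot.coe_injective h
      exact ENat.natCast_ne_top _ this⟩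
  obtain ⟨M, hM, hh⟩ := Ideal.exists_isMaximal_height (R := MvPolynomial σ K)
  obtain ⟨x, rfl⟩ := isMaximal_iff_eq_vanishingIdeal_singleton.mp hM
  rw [hdim] at hh
  let e : MvPolynomial σ K ≃ₐ[K] MvPolynomial σ K := AlgEquiv.ofAlgHom
    (aeval fun i => X i - C (x i)) (aeval fun i => X i + C (x i))
    (by ext i; simp [← algebraMap_eq]) (by ext i; simp [← algebraMap_eq])
  have hc : (vanishingIdeal K ({x} : Set (σ → K))).comap (e.toRingEquiv : MvPolynomial σ K →+* _)
      = vanishingIdeal K ({0} : Set (σ → K)) := by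
    ext p
    rw [Ideal.mem_comap, mem_vanishingIdeal_singleton_iff, mem_vanishingIdeal_singleton_iff]
    have : (aeval x : MvPolynomial σ K →ₐ[K] K).comp e.toAlgHom = aeval (0 : σ → K) := by
      ext i; simp [e]
    have := DFunLike.congr_fun this p
    simp only [AlgHom.comp_apply] at this
    rw [← this]; rfl
  have h2 := RingEquiv.height_comap e.toRingEquiv (vanishingIdeal K ({x} : Set (σ → K)))
  rw [← hc]
  have h3 : (vanishingIdeal K ({x} : Set (σ → K))).height = (Fintype.card σ : ℕ) := by
    exact_mod_cast hh
  rw [← h3]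
  exact h2.ge

/-- Fewer than `card σ` polynomials vanishing at the origin vanish at another point too: if the
origin were an isolated common zero, Krull's height theorem would bound its height by `T.card`. -/
lemma exists_common_zero {K : Type} [Field K] [IsAlgClosed K] {σ : Type} [Fintype σ]
    (T : Finset (MvPolynomial σ K)) (hT : ∀ f ∈ T, eval 0 f = 0)
    (hc : T.card < Fintype.card σ) :
    ∃ x : σ → K, x ≠ 0 ∧ ∀ f ∈ T, eval x f = 0 := by
  by_contra! hcon
  have hm : (vanishingIdeal K ({0} : Set (σ → K)) : Ideal (MvPolynomial σ K)).IsMaximal :=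
    isMaximal_iff_eq_vanishingIdeal_singleton.mpr ⟨0, rfl⟩
  have hle : Ideal.span (T : Set (MvPolynomial σ K)) ≤ vanishingIdeal K ({0} : Set (σ → K)) := by
    rw [Ideal.span_le]
    intro f hf
    rw [SetLike.mem_coe, mem_vanishingIdeal_singleton_iff]
    simpa [coe_aeval_eq_eval] using hT f hf
  have hmin : vanishingIdeal K ({0} : Set (σ → K)) ∈
      (Ideal.span (T : Set (MvPolynomial σ K))).minimalPrimes := by
    refine ⟨⟨hm.isPrime, hle⟩, ?_⟩
    intro Q hQ _
    have hQ1 := hQ.1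
    rw [← IsPrime.vanishingIdeal_zeroLocus (K := K) Q]
    apply vanishingIdeal_anti_mono
    intro x hx
    by_contra hx0
    obtain ⟨f, hf, hfx⟩ := hcon x hx0
    apply hfx
    have := (mem_zeroLocus_iff.mp hx) f (hQ.2 (Ideal.subset_span hf))
    simpa [coe_aeval_eq_eval] using this
  have h1 := Ideal.height_le_card_of_mem_minimalPrimes_span_finset hmin
  have h2 := (height_vanishing_zero (K := K) (σ := σ)).trans h1
  have : Fintype.card σ ≤ T.card := by exact_mod_cast h2
  omega

/-- A polynomial in the square of an ideal `I` with fewer than `card σ` generators, all vanishing at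
the origin, is singular at some nonzero point, namely at any nonzero zero of `I`. -/
lemma false_of_mem_sq {K : Type} [Field K] [IsAlgClosed K] {σ : Type} [Fintype σ]
    (F : MvPolynomial σ K)
    (hsm : ∀ v : σ → K, v ≠ 0 → eval v F = 0 → ∃ i, eval v (pderiv i F) ≠ 0)
    (T : Finset (MvPolynomial σ K)) (hT : ∀ f ∈ T, eval 0 f = 0)
    (hc : T.card < Fintype.card σ)
    (hF : F ∈ Ideal.span (T : Set (MvPolynomial σ K)) * Ideal.span (T : Set (MvPolynomial σ K))) :
    False := by
  obtain ⟨x, hx0, hx⟩ := exists_common_zero T hT hc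
  have hI : ∀ f ∈ Ideal.span (T : Set (MvPolynomial σ K)), eval x f = 0 := by
    intro f hf
    have : Ideal.span (T : Set (MvPolynomial σ K)) ≤ RingHom.ker (eval x) := by
      rw [Ideal.span_le]; intro f hf; exact hx f hf
    exact this hf
  have key : eval x F = 0 ∧ ∀ i, eval x (pderiv i F) = 0 := by
    refine Submodule.mul_induction_on hF ?_ ?_
    · intro a ha b hb
      simp [hI a ha, hI b hb, Derivation.leibniz]
    · intro a b ha hb
      simp [ha.1, hb.1, ha.2, hb.2]
  obtain ⟨i, hi⟩ := hsm x hx0 key.1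
  exact hi (key.2 i)

/-- If `g` maps the zero locus of `J` onto affine space, then the `g i` are algebraically independent
on some irreducible component: otherwise the product over the minimal primes of `J` of the relations
satisfied by `g` on the components would be a nonzero polynomial vanishing everywhere. -/
lemma exists_generic {K : Type} [Field K] [IsAlgClosed K] {σ ι : Type} [Fintype σ] [Fintype ι]
    (J : Ideal (MvPolynomial σ K)) (g : ι → MvPolynomial σ K)
    (h : ∀ a : ι → K, ∃ x ∈ zeroLocus K J, ∀ i, eval x (g i) = a i) :
    ∃ P : Ideal (MvPolynomial σ K), P.IsPrime ∧ J ≤ P ∧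
      AlgebraicIndependent K (fun i => Ideal.Quotient.mkₐ K P (g i)) := by
  by_contra! hcon
  have h1 : ∀ P : Ideal (MvPolynomial σ K), P ∈ J.minimalPrimes →
      ∃ f : MvPolynomial ι K, f ≠ 0 ∧ aeval g f ∈ P := by
    intro P hP
    have h2 := hcon P hP.1.1 hP.1.2
    rw [algebraicIndependent_iff] at h2
    push Not at h2
    obtain ⟨f, hf, hf0⟩ := h2
    refine ⟨f, hf0, ?_⟩
    rw [← Ideal.Quotient.eq_zero_iff_mem, ← hf]
    have := comp_aeval_apply (φ := Ideal.Quotient.mkₐ K P) (f := g) (p := f)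
    rw [← Ideal.Quotient.mkₐ_eq_mk K, this]
  choose! f hf0 hf using h1
  have hfin : J.minimalPrimes.Finite := Ideal.finite_minimalPrimes_of_isNoetherianRing _ J
  let Φ : MvPolynomial ι K := ∏ P ∈ hfin.toFinset, f P
  have hΦ : Φ ≠ 0 := Finset.prod_ne_zero_iff.mpr fun P hP => hf0 P (by simpa using hP)
  apply hΦ
  apply MvPolynomial.funext
  intro a
  obtain ⟨x, hx, hxa⟩ := h a
  rw [map_zero]
  have hJx : J ≤ vanishingIdeal K ({x} : Set (σ → K)) := by
    intro p hp
    rw [mem_vanishingIdeal_singleton_iff]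
    exact hx p hp
  have hm : (vanishingIdeal K ({x} : Set (σ → K)) : Ideal (MvPolynomial σ K)).IsMaximal :=
    isMaximal_iff_eq_vanishingIdeal_singleton.mpr ⟨x, rfl⟩
  obtain ⟨P, hP, hPx⟩ := Ideal.exists_minimalPrimes_le (J := vanishingIdeal K ({x} : Set (σ → K))) hJx
  have h3 : eval a (f P) = 0 := by
    have := hPx (hf P hP)
    rw [mem_vanishingIdeal_singleton_iff, comp_aeval_apply] at this
    have hh : (fun i => (aeval x) (g i)) = a := by
      funext i; simpa [coe_aeval_eq_eval] using hxa i
    rw [hh] at this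
    simpa [coe_aeval_eq_eval] using this
  simp only [Φ, map_prod]
  exact Finset.prod_eq_zero (by simpa using hP) h3

/-- A surjection of domains with nonzero kernel strictly lowers the transcendence degree. -/
lemma trdeg_drop {K A B : Type} [Field K] [CommRing A] [IsDomain A] [CommRing B] [IsDomain B]
    [Algebra K A] [Algebra K B] (f : A →ₐ[K] B) (hf : Function.Surjective f)
    (a : A) (ha : a ≠ 0) (hfa : f a = 0) (n : ℕ) (hn : (n : Cardinal) ≤ Algebra.trdeg K B) :
    ((n + 1 : ℕ) : Cardinal) ≤ Algebra.trdeg K A := by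
  obtain ⟨s, hs⟩ := exists_isTranscendenceBasis K B
  have hcard := hs.cardinalMk_eq_trdeg
  obtain ⟨e⟩ : Nonempty (Fin n ↪ s) := by
    rw [← Cardinal.le_def, hcard]; simpa using hn
  have hind : AlgebraicIndependent K (fun i : Fin n => ((e i : s) : B)) :=
    hs.1.comp e e.injective
  choose g hg using fun i : Fin n => hf (e i : s)
  have hfg : (f ∘ g) = (fun i : Fin n => ((e i : s) : B)) := funext hg
  have hindA : AlgebraicIndependent K g := AlgebraicIndependent.of_comp f (hfg ▸ hind)
  by_contra hlt
  have hle : Algebra.trdeg K A ≤ n := by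
    rw [not_le] at hlt
    push_cast at hlt
    rwa [← Cardinal.succ_natCast, Order.lt_succ_iff] at hlt
  have htb := hindA.isTranscendenceBasis_of_trdeg_le_of_finite (by simpa using hle)
  have halg := htb.isAlgebraic
  obtain ⟨r, hr0, hdvd⟩ :=
    (halg.isAlgebraic a).exists_nonzero_dvd (mem_nonZeroDivisors_of_ne_zero ha)
  have hfr : f r = 0 := by
    obtain ⟨c, hc⟩ := hdvd
    have : (r : A) = a * c := hc
    rw [this]; simp [hfa]
  obtain ⟨p, hp⟩ : (r : A) ∈ (aeval g : MvPolynomial (Fin n) K →ₐ[K] A).range := by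
    rw [← Algebra.adjoin_range_eq_range_aeval]; exact r.2
  have hp' : aeval g p = (r : A) := hp
  rw [← hp', comp_aeval_apply] at hfr
  have hp0 : p = 0 := hind.eq_zero_of_aeval_eq_zero p (by rw [← hfr]; exact congrArg (fun y => aeval y p) hfg.symm)
  apply hr0
  apply Subtype.ext
  rw [← hp', hp0]; simp

/-! The next three lemmas say that a prime of height `k` of `K[x_1, …, x_{m+k}]` is all of `ker f` once it
is contained in it and the image of `f` has transcendence degree at least `m`, for `k = 0, 1, 2`. -/

lemma ker_eq_bot_of_trdeg {K B : Type} [Field K] [CommRing B] [IsDomain B] [Algebra K B] {m : ℕ}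
    (f : MvPolynomial (Fin m) K →ₐ[K] B) (h : (m : Cardinal) ≤ Algebra.trdeg K f.range)
    (p : MvPolynomial (Fin m) K) (hp : f p = 0) : p = 0 := by
  by_contra h0
  have := trdeg_drop f.rangeRestrict f.rangeRestrict_surjective p h0 (Subtype.ext hp) m h
  rw [MvPolynomial.trdeg_of_isDomain] at this
  simp at this

lemma ker_principal_of_trdeg {K B : Type} [Field K] [CommRing B] [IsDomain B] [Algebra K B] {m : ℕ}
    (f : MvPolynomial (Fin (m + 1)) K →ₐ[K] B) (h : (m : Cardinal) ≤ Algebra.trdeg K f.range)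
    (I : Ideal (MvPolynomial (Fin (m + 1)) K)) [hI : I.IsPrime] (r : MvPolynomial (Fin (m + 1)) K)
    (hr0 : r ≠ 0) (hrI : r ∈ I) (hle : I ≤ RingHom.ker f) : I = RingHom.ker f := by
  refine le_antisymm hle fun p hp => ?_
  by_contra hpI
  have h1 := trdeg_drop (Ideal.Quotient.liftₐ I f.rangeRestrict
      (fun a ha => Subtype.ext (hle ha))) (by
      intro b
      obtain ⟨a, rfl⟩ := f.rangeRestrict_surjective b
      exact ⟨Ideal.Quotient.mkₐ K I a, rfl⟩)
      (Ideal.Quotient.mkₐ K I p) (by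
        rw [Ideal.Quotient.mkₐ_eq_mk]
        rwa [Ne, Ideal.Quotient.eq_zero_iff_mem]) (by
        show f.rangeRestrict p = 0; exact Subtype.ext hp) m h
  have h2 := trdeg_drop (Ideal.Quotient.mkₐ K I) (Ideal.Quotient.mkₐ_surjective K I) r hr0
    (by rw [Ideal.Quotient.mkₐ_eq_mk]; rwa [Ideal.Quotient.eq_zero_iff_mem]) _ h1
  rw [MvPolynomial.trdeg_of_isDomain] at h2
  simp at h2

lemma ker_two_of_trdeg {K B : Type} [Field K] [CommRing B] [IsDomain B] [Algebra K B] {m : ℕ}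
    (f : MvPolynomial (Fin (m + 2)) K →ₐ[K] B) (h : (m : Cardinal) ≤ Algebra.trdeg K f.range)
    (J I : Ideal (MvPolynomial (Fin (m + 2)) K)) [hJ : J.IsPrime] [hI : I.IsPrime]
    (hJ0 : J ≠ ⊥) (hJI : J < I)
    (hle : I ≤ RingHom.ker f) : I = RingHom.ker f := by
  refine le_antisymm hle fun p hp => ?_
  by_contra hpI
  obtain ⟨r, hrJ, hr0⟩ := Submodule.exists_mem_ne_zero_of_ne_bot hJ0
  obtain ⟨q, hqI, hqJ⟩ := SetLike.exists_of_lt hJI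
  have h1 := trdeg_drop (Ideal.Quotient.liftₐ I f.rangeRestrict
      (fun a ha => Subtype.ext (hle ha))) (by
      intro b
      obtain ⟨a, rfl⟩ := f.rangeRestrict_surjective b
      exact ⟨Ideal.Quotient.mkₐ K I a, rfl⟩)
      (Ideal.Quotient.mkₐ K I p) (by
        rw [Ideal.Quotient.mkₐ_eq_mk]
        rwa [Ne, Ideal.Quotient.eq_zero_iff_mem]) (by
        show f.rangeRestrict p = 0; exact Subtype.ext hp) m h
  have h2 := trdeg_drop (Ideal.Quotient.factorₐ K hJI.le) (Ideal.Quotient.factor_surjective hJI.le)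
    (Ideal.Quotient.mk J q) (by rwa [Ne, Ideal.Quotient.eq_zero_iff_mem])
    (by simpa [Ideal.Quotient.eq_zero_iff_mem] using hqI) _ h1
  have h3 := trdeg_drop (Ideal.Quotient.mkₐ K J) (Ideal.Quotient.mkₐ_surjective K J) r hr0
    (by rw [Ideal.Quotient.mkₐ_eq_mk]; rwa [Ideal.Quotient.eq_zero_iff_mem]) _ h2
  rw [MvPolynomial.trdeg_of_isDomain] at h3
  simp at h3
  norm_cast at h3
  omega

section
variable {K D : Type} [Field K] [CommRing D] [IsDomain D] [Algebra K D] (S : Subalgebra K D)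
  (s t : D)

/-- Additivity of the transcendence degree in `K ⊆ S ⊆ D`, as a lower bound for `S`. -/
lemma trdeg_add_sub (n k : ℕ) (hn : ((n + k : ℕ) : Cardinal) ≤ Algebra.trdeg K D)
    (hk : Algebra.trdeg S D ≤ k) : (n : Cardinal) ≤ Algebra.trdeg K S := by
  rw [← trdeg_add_eq K S (A := D)] at hn
  have h1 : ((n + k : ℕ) : Cardinal) ≤ Algebra.trdeg K S + k := hn.trans (by gcongr)
  push_cast at h1
  exact (Cardinal.add_le_add_iff_of_lt_aleph0 (Cardinal.natCast_lt_aleph0)).mp h1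

lemma trdeg_two (hgen : Algebra.adjoin S ({s, t} : Set D) = ⊤) : Algebra.trdeg S D ≤ (2 : ℕ) := by
  have : Algebra.IsAlgebraic (Algebra.adjoin S ({s, t} : Set D)) D := by
    rw [hgen]
    exact ⟨fun x => isAlgebraic_algebraMap (A := D) (⟨x, trivial⟩ : (⊤ : Subalgebra S D))⟩
  refine (Algebra.IsAlgebraic.trdeg_le_cardinalMk S ({s, t} : Set D)).trans ?_
  exact_mod_cast Cardinal.mk_insert_le.trans (by simp; norm_num)

lemma trdeg_one (hgen : Algebra.adjoin S ({s, t} : Set D) = ⊤)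
    (hs : IsAlgebraic (Algebra.adjoin S ({t} : Set D)) s) : Algebra.trdeg S D ≤ (1 : ℕ) := by
  have : Algebra.IsAlgebraic (Algebra.adjoin S ({t} : Set D)) D := by
    refine ⟨fun a => IsAlgebraic.adjoin_of_forall_isAlgebraic (s := {s, t}) (t := {t}) ?_ ?_⟩
    · rintro x ⟨rfl | hx, hx'⟩
      · exact hs
      · exact absurd hx hx'
    · exact isAlgebraic_algebraMap (A := D)
        (⟨a, hgen ▸ trivial⟩ : (Algebra.adjoin S ({s, t} : Set D)))
  refine (Algebra.IsAlgebraic.trdeg_le_cardinalMk S ({t} : Set D)).trans ?_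
  simp

lemma trdeg_zero (hgen : Algebra.adjoin S ({s, t} : Set D) = ⊤)
    (hs : IsAlgebraic S s) (ht : IsAlgebraic S t) : Algebra.trdeg S D ≤ (0 : ℕ) := by
  have : Algebra.IsAlgebraic S D := by
    have h : (Algebra.adjoin S ({s, t} : Set D)).IsAlgebraic :=
      Algebra.isAlgebraic_adjoin_iff.mpr (by rintro x (rfl | rfl) <;> assumption)
    exact ⟨fun a => h a (hgen ▸ trivial)⟩
  exact (trdeg_eq_zero_iff.mpr this).le.trans (by simp)
end

/-! ### Homogeneous polynomials and ideals of linear forms -/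

section homog
attribute [local instance] MvPolynomial.gradedAlgebra in
lemma homComp_mul {K σ : Type} [Field K] {i : ℕ} {p : MvPolynomial σ K} (hp : p.IsHomogeneous i)
    (j : ℕ) (a : MvPolynomial σ K) :
    homogeneousComponent (i + j) (p * a) = p * homogeneousComponent j a := by
  have := DirectSum.coe_decompose_mul_add_of_left_mem (homogeneousSubmodule σ K) (i := i) (j := j)
    (a := p) (b := a) hp
  have h : ∀ (f : MvPolynomial σ K) (k : ℕ),
      ((DirectSum.decompose (homogeneousSubmodule σ K) f) k : MvPolynomial σ K) =
        homogeneousComponent k f :=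
    fun f k => decomposition.decompose'_apply f k
  rwa [h, h] at this

lemma lin_repr {K σ : Type} [Field K] [Fintype σ] {p : MvPolynomial σ K}
    (hp : p.IsHomogeneous 1) : ∃ a : σ → K, p = ∑ i, C (a i) * X i := by
  have : p ∈ homogeneousSubmodule σ K 1 := hp
  rw [homogeneousSubmodule_one_eq_span_X, Submodule.mem_span_range_iff_exists_fun] at this
  obtain ⟨a, ha⟩ := this
  exact ⟨a, by rw [← ha]; simp [smul_eq_C_mul]⟩

/-- Linearly independent linear forms `p k` generate a prime ideal. With vectors `u k` dual to them,
it is the kernel of the substitution `x ↦ x - ∑ k, p k (x) • u k`, which is an endomorphism of the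
polynomial ring congruent to the identity modulo the `p k`. -/
lemma lin_prime {K σ κ : Type} [Field K] [Infinite K] [Fintype σ] [Fintype κ]
    (p : κ → MvPolynomial σ K) (hp : ∀ k, (p k).IsHomogeneous 1)
    (hind : ∀ c : κ → K, ∑ k, C (c k) * p k = 0 → c = 0) :
    (Ideal.span (Set.range p)).IsPrime := by
  classical
  choose a ha using fun k => lin_repr (hp k)
  have hev : ∀ k (x : σ → K), eval x (p k) = ∑ i, a k i * x i := by
    intro k x; rw [ha k]; simp
  let Λ : (σ → K) →ₗ[K] (κ → K) := LinearMap.pi fun k => ∑ i, a k i • LinearMap.proj i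
  have hΛ : ∀ x k, Λ x k = eval x (p k) := by
    intro x k; rw [hev]; simp [Λ]
  have hsurj : LinearMap.range Λ = ⊤ := by
    by_contra hne
    obtain ⟨f, hf0, hf⟩ := Submodule.exists_le_ker_of_lt_top _ (lt_top_iff_ne_top.mpr hne)
    apply hf0
    have hc : (fun k => f (Pi.single k 1)) = 0 := by
      apply hind
      apply MvPolynomial.funext
      intro x
      have : f (Λ x) = 0 := hf ⟨x, rfl⟩
      rw [LinearMap.pi_apply_eq_sum_univ] at this
      simp only [map_sum, map_mul, eval_C, map_zero]
      rw [← this]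
      refine Finset.sum_congr rfl fun k _ => ?_
      rw [hΛ, smul_eq_mul, mul_comm]
      congr 2
      funext j
      simp [Pi.single_apply, eq_comm]
    refine LinearMap.pi_ext' fun k => LinearMap.ext_ring ?_
    simpa using congrFun hc k
  choose u hu using fun k : κ => LinearMap.range_eq_top.mp hsurj (Pi.single k 1)
  let φ : MvPolynomial σ K →ₐ[K] MvPolynomial σ K :=
    aeval fun i => X i - ∑ k, C (u k i) * p k
  have h1 : ∀ f, Ideal.Quotient.mkₐ K (Ideal.span (Set.range p)) (φ f) =
      Ideal.Quotient.mkₐ K (Ideal.span (Set.range p)) f := by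
    intro f
    rw [← AlgHom.comp_apply]
    congr 1
    ext i
    simp only [AlgHom.comp_apply, φ, aeval_X, map_sub, map_sum, map_mul]
    rw [sub_eq_self]
    refine Finset.sum_eq_zero fun k _ => ?_
    have : Ideal.Quotient.mkₐ K (Ideal.span (Set.range p)) (p k) = 0 := by
      rw [Ideal.Quotient.mkₐ_eq_mk, Ideal.Quotient.eq_zero_iff_mem]
      exact Ideal.subset_span ⟨k, rfl⟩
    rw [this, mul_zero]
  have h2 : ∀ j, φ (p j) = 0 := by
    intro j
    have hdual : ∀ k, ∑ i, a j i * u k i = if j = k then 1 else 0 := by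
      intro k
      rw [← hev, ← hΛ, hu, Pi.single_apply]
    have : φ (p j) = ∑ i, C (a j i) * (X i - ∑ k, C (u k i) * p k) := by
      conv_lhs => rw [ha j]
      simp [φ, ← algebraMap_eq]
    rw [this]
    simp only [mul_sub, Finset.sum_sub_distrib, ← ha j, Finset.mul_sum]
    rw [Finset.sum_comm]
    simp only [← mul_assoc, ← C_mul, ← Finset.sum_mul, ← map_sum, hdual]
    simp
  have : Ideal.span (Set.range p) = RingHom.ker φ := by
    apply le_antisymm
    · rw [Ideal.span_le]
      rintro _ ⟨j, rfl⟩
      exact h2 j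
    · intro f hf
      have := h1 f
      rw [show φ f = 0 from hf, map_zero, Ideal.Quotient.mkₐ_eq_mk, eq_comm,
        Ideal.Quotient.eq_zero_iff_mem] at this
      exact this
  rw [this]
  exact RingHom.ker_isPrime φ

lemma lin_prime_one {K σ : Type} [Field K] [Infinite K] [Fintype σ]
    {p : MvPolynomial σ K} (hp : p.IsHomogeneous 1) (h0 : p ≠ 0) :
    (Ideal.span {p}).IsPrime := by
  have := lin_prime (κ := Unit) (fun _ => p) (fun _ => hp) (by
    intro c hc
    funext _
    simp only [Finset.univ_unique, Finset.sum_singleton, mul_eq_zero, h0, or_false] at hc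
    exact C_eq_zero.mp hc)
  simpa using this

lemma lin_prime_two {K σ : Type} [Field K] [Infinite K] [Fintype σ]
    {p q : MvPolynomial σ K} (hp : p.IsHomogeneous 1) (hq : q.IsHomogeneous 1) (h0 : p ≠ 0)
    (hpq : ∀ c : K, q ≠ C c * p) :
    (Ideal.span {p, q}).IsPrime := by
  have := lin_prime (κ := Fin 2) ![p, q] (by intro k; fin_cases k <;> simpa) (by
    intro c hc
    simp only [Fin.sum_univ_two, Matrix.cons_val_zero, Matrix.cons_val_one] at hc
    have h1 : c 1 = 0 := by
      by_contra h1
      apply hpq (-(c 1)⁻¹ * c 0)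
      have : C (c 1)⁻¹ * (C (c 0) * p + C (c 1) * q) = 0 := by rw [hc, mul_zero]
      have h3 : C (σ := σ) (c 1)⁻¹ * C (c 1) = 1 := by
        rw [← C_mul, inv_mul_cancel₀ h1, C_1]
      rw [C_mul, C_neg]
      linear_combination this - q * h3
    rw [h1] at hc
    simp [h0] at hc
    funext k; fin_cases k
    · exact hc
    · exact h1)
  simpa [Set.pair_comm] using this

/-- A form divisible by a form has a homogeneous cofactor of the expected degree. -/
lemma hom_cofactor {K σ : Type} [Field K] {i j : ℕ} {p f : MvPolynomial σ K}
    (hp : p.IsHomogeneous i) (hf : f.IsHomogeneous (i + j)) (hd : p ∣ f) :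
    ∃ a, a.IsHomogeneous j ∧ f = p * a := by
  obtain ⟨a, rfl⟩ := hd
  refine ⟨homogeneousComponent j a, homogeneousComponent_isHomogeneous _ _, ?_⟩
  rw [← homComp_mul hp, homogeneousComponent_of_mem hf, if_pos rfl]

lemma hom_cofactor_two {K σ : Type} [Field K] {i i' j j' d : ℕ} {p q f : MvPolynomial σ K}
    (hp : p.IsHomogeneous i) (hq : q.IsHomogeneous i')
    (hf : f.IsHomogeneous d) (h1 : i + j = d) (h2 : i' + j' = d) (hd : f ∈ Ideal.span {p, q}) :
    ∃ a b, a.IsHomogeneous j ∧ b.IsHomogeneous j' ∧ f = p * a + q * b := by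
  obtain ⟨a, b, hab⟩ := Ideal.mem_span_pair.mp hd
  refine ⟨homogeneousComponent j a, homogeneousComponent j' b,
    homogeneousComponent_isHomogeneous _ _, homogeneousComponent_isHomogeneous _ _, ?_⟩
  rw [← homComp_mul hp, ← homComp_mul hq, h1, h2, ← map_add]
  rw [show p * a + q * b = f by rw [← hab]; ring, homogeneousComponent_of_mem hf, if_pos rfl]

end homog

lemma order_le_degree {K σ : Type} [Field K] {f : MvPolynomial σ K} {d : σ →₀ ℕ}
    (hd : coeff d f ≠ 0) : (f : MvPowerSeries σ K).order ≤ d.degree :=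
  MvPowerSeries.order_le (by rwa [MvPolynomial.coeff_coe])

/-- Factors of forms are forms: total degrees and orders (lowest degrees of a monomial) are both
additive, and they agree on a form. The order is the one of `MvPowerSeries`. -/
lemma hom_of_dvd {K σ : Type} [Field K] {d : ℕ} {r f : MvPolynomial σ K}
    (hf : f.IsHomogeneous d) (hf0 : f ≠ 0) (hr : r ∣ f) :
    r.IsHomogeneous r.totalDegree ∧ r.totalDegree ≤ d := by
  obtain ⟨a, rfl⟩ := hr
  have hr0 : r ≠ 0 := left_ne_zero_of_mul hf0
  have ha0 : a ≠ 0 := right_ne_zero_of_mul hf0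
  have htd : r.totalDegree + a.totalDegree = d := by
    rw [← totalDegree_mul_of_isDomain hr0 ha0, hf.totalDegree hf0]
  have key : ∀ g : MvPolynomial σ K, g ≠ 0 →
      (g : MvPowerSeries σ K).order ≤ (g.totalDegree : ℕ∞) := by
    intro g hg
    obtain ⟨e, he⟩ := MvPolynomial.exists_coeff_ne_zero hg
    refine (order_le_degree he).trans ?_
    exact_mod_cast le_totalDegree (mem_support_iff.mpr he)
  have hord : (d : ℕ∞) ≤ (r : MvPowerSeries σ K).order + (a : MvPowerSeries σ K).order := by
    rw [← MvPowerSeries.order_mul, ← MvPolynomial.coe_mul]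
    apply MvPowerSeries.nat_le_order
    intro e he
    rw [MvPolynomial.coeff_coe]
    by_contra h
    have h2 : Finsupp.degree e = d := by
      rw [Finsupp.degree_eq_weight_one]; exact hf h
    omega
  refine ⟨?_, by omega⟩
  intro e he
  have h1 : (r : MvPowerSeries σ K).order ≤ (e.degree : ℕ∞) := order_le_degree he
  have h2 : e.degree ≤ r.totalDegree := le_totalDegree (mem_support_iff.mpr he)
  have h3 : (d : ℕ∞) ≤ e.degree + a.totalDegree := hord.trans (add_le_add h1 (key a ha0))
  have h4 : d ≤ e.degree + a.totalDegree := by exact_mod_cast h3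
  have h5 : Finsupp.weight 1 e = e.degree := by
    rw [Finsupp.degree_eq_weight_one]; rfl
  omega

/-! ### Cubics containing a line -/

section core
variable {K : Type} [Field K] {m : ℕ}

/-- Polynomials in the coordinates `y` (indexed by `Fin m`) transverse to the line, seen as
polynomials in all coordinates; `Sum.inl 0`, `Sum.inl 1` are the coordinates `s, t` of the line. -/
noncomputable abbrev base : MvPolynomial (Fin m) K →ₐ[K] MvPolynomial (Fin 2 ⊕ Fin m) K :=
  rename Sum.inr

/-- The polynomial `s² l₁ + s t l₂ + t² l₃ + s q₁ + t q₂ + c`. -/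
noncomputable def fam (l₁ l₂ l₃ q₁ q₂ c : MvPolynomial (Fin m) K) :
    MvPolynomial (Fin 2 ⊕ Fin m) K :=
  X (Sum.inl 0) ^ 2 * base l₁ + X (Sum.inl 0) * X (Sum.inl 1) * base l₂
    + X (Sum.inl 1) ^ 2 * base l₃ + X (Sum.inl 0) * base q₁ + X (Sum.inl 1) * base q₂ + base c

lemma pderiv_inl_base (k : Fin 2) (p : MvPolynomial (Fin m) K) :
    pderiv (Sum.inl k) (base p : MvPolynomial (Fin 2 ⊕ Fin m) K) = 0 := by
  apply pderiv_eq_zero_of_notMem_vars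
  intro h
  have := vars_rename (R := K) (Sum.inr : Fin m → Fin 2 ⊕ Fin m) p h
  simp at this

lemma pderiv_inr_base (i : Fin m) (p : MvPolynomial (Fin m) K) :
    pderiv (Sum.inr i) (base p : MvPolynomial (Fin 2 ⊕ Fin m) K) = base (pderiv i p) :=
  pderiv_rename Sum.inr_injective _ _

variable (l₁ l₂ l₃ q₁ q₂ c : MvPolynomial (Fin m) K)

lemma pderiv_fam_zero : pderiv (Sum.inl 0) (fam l₁ l₂ l₃ q₁ q₂ c) =
    2 * X (Sum.inl 0) * base l₁ + X (Sum.inl 1) * base l₂ + base q₁ := by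
  simp only [fam, map_add, Derivation.leibniz, Derivation.leibniz_pow, pderiv_inl_base,
    pderiv_X_self, pderiv_X_of_ne (show (Sum.inl 1 : Fin 2 ⊕ Fin m) ≠ Sum.inl 0 by simp),
    smul_eq_mul, nsmul_eq_mul]
  push_cast
  ring

lemma pderiv_fam_one : pderiv (Sum.inl 1) (fam l₁ l₂ l₃ q₁ q₂ c) =
    X (Sum.inl 0) * base l₂ + 2 * X (Sum.inl 1) * base l₃ + base q₂ := by
  simp only [fam, map_add, Derivation.leibniz, Derivation.leibniz_pow, pderiv_inl_base,
    pderiv_X_self, pderiv_X_of_ne (show (Sum.inl 0 : Fin 2 ⊕ Fin m) ≠ Sum.inl 1 by simp),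
    smul_eq_mul, nsmul_eq_mul]
  push_cast
  ring

lemma pderiv_fam_inr (i : Fin m) : pderiv (Sum.inr i) (fam l₁ l₂ l₃ q₁ q₂ c) =
    fam (pderiv i l₁) (pderiv i l₂) (pderiv i l₃) (pderiv i q₁) (pderiv i q₂) (pderiv i c) := by
  simp only [fam, map_add, Derivation.leibniz, Derivation.leibniz_pow, pderiv_inr_base,
    pderiv_X_of_ne (show (Sum.inl 0 : Fin 2 ⊕ Fin m) ≠ Sum.inr i by simp),
    pderiv_X_of_ne (show (Sum.inl 1 : Fin 2 ⊕ Fin m) ≠ Sum.inr i by simp),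
    smul_eq_mul, nsmul_eq_mul]
  ring

lemma eval_base (x : Fin 2 ⊕ Fin m → K) (p : MvPolynomial (Fin m) K) :
    eval x (base p) = eval (fun i => x (Sum.inr i)) p := by
  rw [eval_rename]; rfl

lemma eval_fam (x : Fin 2 ⊕ Fin m → K) (y : Fin m → K) (hy : y = fun i => x (Sum.inr i)) :
    eval x (fam l₁ l₂ l₃ q₁ q₂ c) =
    x (Sum.inl 0) ^ 2 * eval y l₁ + x (Sum.inl 0) * x (Sum.inl 1) * eval y l₂
    + x (Sum.inl 1) ^ 2 * eval y l₃ + x (Sum.inl 0) * eval y q₁ + x (Sum.inl 1) * eval y q₂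
    + eval y c := by
  subst hy
  simp [fam, eval_base]

lemma const_zero_of_hom {σ : Type} {d : ℕ} (hd : d ≠ 0) {p : MvPolynomial σ K}
    (hp : p.IsHomogeneous d) : constantCoeff p = 0 := by
  rw [constantCoeff_eq]
  exact hp.coeff_eq_zero (by simpa using hd.symm)

lemma eval_zero_of_hom {σ : Type} {d : ℕ} (hd : d ≠ 0) {p : MvPolynomial σ K}
    (hp : p.IsHomogeneous d) :
    eval 0 p = 0 := by
  rw [MvPolynomial.eval_zero, const_zero_of_hom hd hp]

variable {l₁ l₂ l₃ q₁ q₂ c}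

/-- The forms `l₁, l₂, l₃, q₁, q₂, c`, of degrees 1, 1, 1, 2, 2, 3, are the coefficients of a cubic
form `fam l₁ l₂ l₃ q₁ q₂ c` containing the line `y = 0` and with smooth zero locus. -/
structure SmoothData (l₁ l₂ l₃ q₁ q₂ c : MvPolynomial (Fin m) K) : Prop where
  hl₁ : l₁.IsHomogeneous 1
  hl₂ : l₂.IsHomogeneous 1
  hl₃ : l₃.IsHomogeneous 1
  hq₁ : q₁.IsHomogeneous 2
  hq₂ : q₂.IsHomogeneous 2
  hc : c.IsHomogeneous 3
  smooth : ∀ v : Fin 2 ⊕ Fin m → K, v ≠ 0 → eval v (fam l₁ l₂ l₃ q₁ q₂ c) = 0 →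
    ∃ i, eval v (pderiv i (fam l₁ l₂ l₃ q₁ q₂ c)) ≠ 0

/-- The linear form `a² l₁ + a b l₂ + b² l₃` gives the gradient of the cubic at the point
`(a, b, 0)` of the line. -/
lemma SmoothData.net (h : SmoothData l₁ l₂ l₃ q₁ q₂ c) (a b : K) (hab : a ≠ 0 ∨ b ≠ 0) :
    C (a ^ 2) * l₁ + C (a * b) * l₂ + C (b ^ 2) * l₃ ≠ 0 := by
  intro h0
  obtain ⟨i, hi⟩ := h.smooth (Sum.elim ![a, b] 0) (by
    intro hx
    have h1 := congrFun hx (Sum.inl 0)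
    have h2 := congrFun hx (Sum.inl 1)
    simp at h1 h2
    tauto) (by
    rw [eval_fam (y := 0) (hy := by ext; simp)]
    simp [const_zero_of_hom (by norm_num) h.hl₁, const_zero_of_hom (by norm_num) h.hl₂,
      const_zero_of_hom (by norm_num) h.hl₃, const_zero_of_hom (by norm_num) h.hq₁,
      const_zero_of_hom (by norm_num) h.hq₂, const_zero_of_hom (by norm_num) h.hc])
  apply hi
  have hy : (fun i => Sum.elim ![a, b] (0 : Fin m → K) (Sum.inr i)) = 0 := by ext; simp
  rcases i with i | i
  · fin_cases i
    · simp only [Fin.zero_eta, pderiv_fam_zero, map_add, map_mul, eval_base, hy,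
        eval_zero_of_hom (by norm_num) h.hl₁, eval_zero_of_hom (by norm_num) h.hl₂,
        eval_zero_of_hom (by norm_num) h.hq₁, mul_zero, add_zero]
    · simp only [Fin.mk_one, pderiv_fam_one, map_add, map_mul, eval_base, hy,
        eval_zero_of_hom (by norm_num) h.hl₃, eval_zero_of_hom (by norm_num) h.hl₂,
        eval_zero_of_hom (by norm_num) h.hq₂, mul_zero, add_zero]
  · rw [pderiv_fam_inr, eval_fam (y := 0) (hy := hy.symm)]
    have h1 := congrArg (fun p => eval 0 (pderiv i p)) h0
    simp [Derivation.leibniz] at h1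
    simp [const_zero_of_hom one_ne_zero h.hq₁.pderiv, const_zero_of_hom one_ne_zero h.hq₂.pderiv,
      const_zero_of_hom two_ne_zero h.hc.pderiv]
    linear_combination h1

/-! ### The generic point and its discriminant -/

lemma alg_of_quad {A D : Type} [CommRing A] [CommRing D] [Algebra A D] (s : D) (a b c : A)
    (h : a ≠ 0 ∨ b ≠ 0)
    (he : algebraMap A D a * s ^ 2 + algebraMap A D b * s + algebraMap A D c = 0) :
    IsAlgebraic A s := by
  refine ⟨Polynomial.C a * Polynomial.X ^ 2 + Polynomial.C b * Polynomial.X + Polynomial.C c,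
    ?_, by simpa using he⟩
  intro h0
  rcases h with h | h
  · apply h
    simpa [Polynomial.coeff_X, Polynomial.coeff_C] using congrArg (fun p => p.coeff 2) h0
  · apply h
    simpa [Polynomial.coeff_X, Polynomial.coeff_C] using congrArg (fun p => p.coeff 1) h0

/-- A point `(s, t, f)` over the domain `D` of the cone where `F = fam l₁ l₂ l₃ q₁ q₂ c` and its
derivatives along the line vanish; the coordinates `y` are encoded in `f`. The ring `D` is generated
by the coordinates of the point (`gen`) and the closure of the point has dimension at least `m`
(`tr`). -/
structure GenericPoint {D : Type} [CommRing D] [Algebra K D]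
    (l₁ l₂ l₃ q₁ q₂ c : MvPolynomial (Fin m) K)
    (f : MvPolynomial (Fin m) K →ₐ[K] D) (s t : D) : Prop where
  eqF : s ^ 2 * f l₁ + s * t * f l₂ + t ^ 2 * f l₃ + s * f q₁ + t * f q₂ + f c = 0
  eqA : 2 * s * f l₁ + t * f l₂ + f q₁ = 0
  eqB : s * f l₂ + 2 * t * f l₃ + f q₂ = 0
  gen : Algebra.adjoin f.range ({s, t} : Set D) = ⊤
  tr : (m : Cardinal) ≤ Algebra.trdeg K D

variable {D : Type} [CommRing D] [IsDomain D] [Algebra K D]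
  {f : MvPolynomial (Fin m) K →ₐ[K] D} {s t : D}

/-- If `δ = 4 l₁ l₃ - l₂²` did not vanish at the generic point, `(S / δ, T / δ, y)` with `S, T` from
Cramer's rule would parametrize it, and all derivatives of the cubic would vanish at every such
point with `δ(y) ≠ 0`. -/
lemma SmoothData.disc_eq_zero [IsAlgClosed K] (h : SmoothData l₁ l₂ l₃ q₁ q₂ c)
    (g : GenericPoint l₁ l₂ l₃ q₁ q₂ c f s t) : f (4 * l₁ * l₃ - l₂ ^ 2) = 0 := by
  by_contra hδ
  obtain ⟨δ, hδdef⟩ : ∃ δ, δ = 4 * l₁ * l₃ - l₂ ^ 2 := ⟨_, rfl⟩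
  obtain ⟨S, hS⟩ : ∃ S, S = l₂ * q₂ - 2 * l₃ * q₁ := ⟨_, rfl⟩
  obtain ⟨T, hT⟩ : ∃ T, T = l₂ * q₁ - 2 * l₁ * q₂ := ⟨_, rfl⟩
  rw [← hδdef] at hδ
  have hfδ : f δ = 4 * f l₁ * f l₃ - f l₂ ^ 2 := by
    rw [hδdef]; simp only [map_sub, map_mul, map_pow, map_ofNat]
  have hs : f δ * s = f S := by
    rw [hfδ, hS]; simp only [map_sub, map_mul, map_ofNat]
    linear_combination 2 * f l₃ * g.eqA - f l₂ * g.eqB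
  have ht : f δ * t = f T := by
    rw [hfδ, hT]; simp only [map_sub, map_mul, map_ofNat]
    linear_combination 2 * f l₁ * g.eqB - f l₂ * g.eqA
  have halg : ∀ (u : D) (U : MvPolynomial (Fin m) K), f δ * u = f U → IsAlgebraic f.range u := by
    intro u U hu
    refine alg_of_quad u 0 ⟨f δ, δ, rfl⟩ (-⟨f U, U, rfl⟩)
      (Or.inr fun h0 => hδ (congrArg Subtype.val h0)) ?_
    simp only [map_zero, zero_mul, zero_add, map_neg]
    show f δ * u + -(f U) = 0
    rw [hu]; ring
  have htr : (m : Cardinal) ≤ Algebra.trdeg K f.range :=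
    trdeg_add_sub f.range m 0 g.tr (trdeg_zero f.range s t g.gen (halg s S hs) (halg t T ht))
  have hker := ker_eq_bot_of_trdeg f htr
  have hH : S ^ 2 * l₁ + S * T * l₂ + T ^ 2 * l₃ + S * δ * q₁ + T * δ * q₂ + δ ^ 2 * c = 0 := by
    apply hker
    simp only [map_add, map_mul, map_pow, ← hs, ← ht]
    linear_combination f δ ^ 2 * g.eqF
  have h1 : 2 * l₁ * S + l₂ * T + δ * q₁ = 0 := by rw [hS, hT, hδdef]; ring
  have h2 : l₂ * S + 2 * l₃ * T + δ * q₂ = 0 := by rw [hS, hT, hδdef]; ring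
  have hδ0 : δ ≠ 0 := by rintro rfl; simp at hδ
  -- Twice the equation of the cubic, reduced by the two derivatives along the line.
  have h3 : S * q₁ + T * q₂ + 2 * δ * c = 0 := by
    have : δ * (S * q₁ + T * q₂ + 2 * δ * c) = 0 := by
      linear_combination 2 * hH - S * h1 - T * h2
    exact (mul_eq_zero.mp this).resolve_left hδ0
  have h4 : ∀ i, S ^ 2 * pderiv i l₁ + S * T * pderiv i l₂ + T ^ 2 * pderiv i l₃
      + S * δ * pderiv i q₁ + T * δ * pderiv i q₂ + δ ^ 2 * pderiv i c = 0 := by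
    intro i
    have := congrArg (pderiv i) hH
    simp only [map_add, Derivation.leibniz, Derivation.leibniz_pow, smul_eq_mul, nsmul_eq_mul,
      map_zero] at this
    push_cast at this
    linear_combination this - pderiv i S * h1 - pderiv i T * h2 - pderiv i δ * h3
  obtain ⟨y, hy⟩ : ∃ y, eval y δ ≠ 0 := by
    by_contra! hcon
    exact hδ0 (MvPolynomial.funext fun y => by simpa using hcon y)
  have hy0 : y ≠ 0 := by
    rintro rfl
    apply hy
    rw [hδdef]
    simp [const_zero_of_hom one_ne_zero h.hl₁, const_zero_of_hom one_ne_zero h.hl₂]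
  obtain ⟨i, hi⟩ := h.smooth (Sum.elim ![eval y S / eval y δ, eval y T / eval y δ] y) (by
      intro hx
      exact hy0 (funext fun i => by simpa using congrFun hx (Sum.inr i))) (by
      rw [eval_fam (y := y) (hy := by ext; simp)]
      have := congrArg (eval y) hH
      simp only [map_add, map_mul, map_pow, map_zero] at this
      simp only [Sum.elim_inl, Matrix.cons_val_zero, Matrix.cons_val_one]
      field_simp
      linear_combination this)
  apply hi
  have hy' : (fun i => Sum.elim ![eval y S / eval y δ, eval y T / eval y δ] y (Sum.inr i)) = y := by
    ext; simp
  rcases i with i | i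
  · fin_cases i
    · simp only [Fin.zero_eta, pderiv_fam_zero, map_add, map_mul, eval_base, hy', eval_X,
        Sum.elim_inl, Matrix.cons_val_zero, Matrix.cons_val_one, map_ofNat]
      have := congrArg (eval y) h1
      simp only [map_add, map_mul, map_ofNat, map_zero] at this
      field_simp
      linear_combination this
    · simp only [Fin.mk_one, pderiv_fam_one, map_add, map_mul, eval_base, hy', eval_X,
        Sum.elim_inl, Matrix.cons_val_zero, Matrix.cons_val_one, map_ofNat]
      have := congrArg (eval y) h2
      simp only [map_add, map_mul, map_ofNat, map_zero] at this
      field_simp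
      linear_combination this
  · rw [pderiv_fam_inr, eval_fam (y := y) (hy := hy'.symm)]
    have := congrArg (eval y) (h4 i)
    simp only [map_add, map_mul, map_pow, map_zero] at this
    simp only [Sum.elim_inl, Matrix.cons_val_zero, Matrix.cons_val_one]
    field_simp
    linear_combination this

/-! ### The case where the three linear forms vanish -/

lemma quad_root [IsAlgClosed K] (β γ : K) : ∃ a : K, a ^ 2 + a * β + γ = 0 := by
  obtain ⟨a, ha⟩ := IsAlgClosed.exists_root
    (Polynomial.X ^ 2 + Polynomial.C β * Polynomial.X + Polynomial.C γ) (by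
      have : (Polynomial.X ^ 2 + Polynomial.C β * Polynomial.X + Polynomial.C γ).degree = 2 := by
        compute_degree!
      rw [this]; norm_num)
  refine ⟨a, ?_⟩
  simp only [Polynomial.IsRoot.def, Polynomial.eval_add, Polynomial.eval_pow, Polynomial.eval_X,
    Polynomial.eval_mul, Polynomial.eval_C] at ha
  linear_combination ha

lemma eq_C_of_hom_zero {σ : Type} {a : MvPolynomial σ K} (ha : a.IsHomogeneous 0) :
    ∃ c, a = C c :=
  ⟨_, totalDegree_eq_zero_iff_eq_C.mp (Nat.le_zero.mp ha.totalDegree_le)⟩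

lemma eq_C_mul_of_dvd {σ : Type} {i : ℕ} {p q : MvPolynomial σ K} (hp : p.IsHomogeneous i)
    (hq : q.IsHomogeneous i) (h : p ∣ q) : ∃ c, q = C c * p := by
  obtain ⟨a, ha, rfl⟩ := hom_cofactor (j := 0) hp hq h
  obtain ⟨c, rfl⟩ := eq_C_of_hom_zero ha
  exact ⟨c, mul_comm _ _⟩

lemma constantCoeff_base (p : MvPolynomial (Fin m) K) :
    constantCoeff (base p : MvPolynomial (Fin 2 ⊕ Fin m) K) = constantCoeff p :=
  constantCoeff_rename _ _

/-- If `f l₁ = f l₃ = 0`, all six coefficients lie in `ker f`, which is generated by `l₁` and a second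
linear form `q`; this puts the cubic in the square of an ideal with four generators. -/
lemma SmoothData.not_all_mem [IsAlgClosed K] {k : ℕ} (hk : 1 ≤ k)
    {l₁ l₂ l₃ q₁ q₂ c : MvPolynomial (Fin (k + 2)) K}
    {f : MvPolynomial (Fin (k + 2)) K →ₐ[K] D} (h : SmoothData l₁ l₂ l₃ q₁ q₂ c)
    (g : GenericPoint l₁ l₂ l₃ q₁ q₂ c f s t) (hδ : f (4 * l₁ * l₃ - l₂ ^ 2) = 0)
    (h1 : f l₁ = 0) (h3 : f l₃ = 0) : False := by
  classical
  have h2 : f l₂ = 0 := by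
    simpa [h1, h3] using hδ
  have hq1 : f q₁ = 0 := by simpa [h1, h2, h3] using g.eqA
  have hq2 : f q₂ = 0 := by simpa [h1, h2, h3] using g.eqB
  have hc : f c = 0 := by simpa [h1, h2, h3, hq1, hq2] using g.eqF
  have htr : (k : Cardinal) ≤ Algebra.trdeg K f.range :=
    trdeg_add_sub f.range k 2 g.tr (trdeg_two f.range s t g.gen)
  have hl1 : l₁ ≠ 0 := by simpa using h.net 1 0 (by simp)
  -- If `l₂ = β l₁` and `l₃ = γ l₁`, a root of `a² + a β + γ` gives a singular point on the line.
  obtain ⟨q, hq, hfq, hql⟩ : ∃ q : MvPolynomial (Fin (k + 2)) K, q.IsHomogeneous 1 ∧ f q = 0 ∧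
      ∀ a : K, q ≠ C a * l₁ := by
    by_contra! hcon
    obtain ⟨β, hβ⟩ := hcon l₂ h.hl₂ h2
    obtain ⟨γ, hγ⟩ := hcon l₃ h.hl₃ h3
    obtain ⟨a, ha⟩ := quad_root β γ
    apply h.net a 1 (by simp)
    rw [hβ, hγ]
    have : C (σ := Fin (k + 2)) (a ^ 2 + a * β + γ) = 0 := by rw [ha, C_0]
    simp only [map_add, map_mul, map_pow] at this
    simp only [map_mul, map_pow, C_1]
    linear_combination l₁ * this
  have hJ : (Ideal.span {l₁}).IsPrime := lin_prime_one h.hl₁ hl1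
  have hI : (Ideal.span {l₁, q}).IsPrime := lin_prime_two h.hl₁ hq hl1 hql
  have hIker : Ideal.span {l₁, q} = RingHom.ker f := by
    refine ker_two_of_trdeg f htr (Ideal.span {l₁}) _ (by simpa using hl1) ?_ ?_
    · refine lt_of_le_of_ne (Ideal.span_mono (by simp)) fun he => ?_
      have hqm : q ∈ Ideal.span {l₁} := he ▸ Ideal.subset_span (by simp)
      obtain ⟨a, ha⟩ := eq_C_mul_of_dvd h.hl₁ hq (Ideal.mem_span_singleton.mp hqm)
      exact hql a ha
    · rw [Ideal.span_le]
      rintro p (rfl | rfl) <;> assumption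
  have mem : ∀ p, f p = 0 → p ∈ Ideal.span {l₁, q} := by
    intro p hp; rw [hIker]; exact hp
  obtain ⟨x1, y1, -, -, e1⟩ := hom_cofactor_two (j := 0) (j' := 0) h.hl₁ hq h.hl₁ rfl rfl (mem _ h1)
  obtain ⟨x2, y2, -, -, e2⟩ := hom_cofactor_two (j := 0) (j' := 0) h.hl₁ hq h.hl₂ rfl rfl (mem _ h2)
  obtain ⟨x3, y3, -, -, e3⟩ := hom_cofactor_two (j := 0) (j' := 0) h.hl₁ hq h.hl₃ rfl rfl (mem _ h3)
  obtain ⟨x4, y4, -, -, e4⟩ := hom_cofactor_two (j := 1) (j' := 1) h.hl₁ hq h.hq₁ rfl rfl (mem _ hq1)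
  obtain ⟨x5, y5, -, -, e5⟩ := hom_cofactor_two (j := 1) (j' := 1) h.hl₁ hq h.hq₂ rfl rfl (mem _ hq2)
  obtain ⟨x6, y6, hx6, hy6, e6⟩ :=
    hom_cofactor_two (j := 2) (j' := 2) h.hl₁ hq h.hc rfl rfl (mem _ hc)
  have hF : fam l₁ l₂ l₃ q₁ q₂ c =
      base l₁ * fam x1 x2 x3 x4 x5 x6 + base q * fam y1 y2 y3 y4 y5 y6 := by
    conv_lhs => rw [e2, e3, e4, e5, e6]
    have := congrArg base e1
    simp only [map_add, map_mul] at this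
    simp only [fam, map_add, map_mul]
    linear_combination X (Sum.inl 0) ^ 2 * this
  refine false_of_mem_sq _ h.smooth
    {base l₁, fam x1 x2 x3 x4 x5 x6, base q, fam y1 y2 y3 y4 y5 y6} ?_ ?_ ?_
  · intro p hp
    simp only [Finset.mem_insert, Finset.mem_singleton] at hp
    rw [MvPolynomial.eval_zero]
    rcases hp with rfl | rfl | rfl | rfl
    · rw [constantCoeff_base, const_zero_of_hom one_ne_zero h.hl₁]
    · simp [fam, const_zero_of_hom two_ne_zero hx6]
    · rw [constantCoeff_base, const_zero_of_hom one_ne_zero hq]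
    · simp [fam, const_zero_of_hom two_ne_zero hy6]
  · refine Finset.card_le_four.trans_lt ?_
    simp; omega
  · rw [hF]
    refine add_mem ?_ ?_ <;>
    exact Ideal.mul_mem_mul (Ideal.subset_span (by simp)) (Ideal.subset_span (by simp))

/-! ### Kernels of height one, and characteristic two -/

/-- If `f l₁ ≠ 0`, the equation `F = 0` is a nontrivial quadratic equation for `s` over `f` and `t`
(symmetrically for `l₃`), so `D` has transcendence degree at most one over the image of `f`. -/
lemma trdeg_of_leading {k : ℕ} {l₁ l₂ l₃ q₁ q₂ c : MvPolynomial (Fin (k + 1)) K}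
    {f : MvPolynomial (Fin (k + 1)) K →ₐ[K] D}
    (g : GenericPoint l₁ l₂ l₃ q₁ q₂ c f s t) (h1 : f l₁ ≠ 0 ∨ f l₃ ≠ 0) :
    (k : Cardinal) ≤ Algebra.trdeg K f.range := by
  have hmem : ∀ (u : D) (p : MvPolynomial (Fin (k + 1)) K),
      f p ∈ Algebra.adjoin f.range ({u} : Set D) := fun u p =>
    Subalgebra.algebraMap_mem (Algebra.adjoin f.range ({u} : Set D)) (⟨f p, p, rfl⟩ : f.range)
  have hu : ∀ u : D, u ∈ Algebra.adjoin f.range ({u} : Set D) := fun u =>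
    Algebra.subset_adjoin (by simp)
  rcases h1 with h1 | h1
  · refine trdeg_add_sub f.range k 1 g.tr (trdeg_one f.range s t g.gen ?_)
    refine alg_of_quad s ⟨f l₁, hmem t l₁⟩ ⟨t * f l₂ + f q₁, ?_⟩
      ⟨t ^ 2 * f l₃ + t * f q₂ + f c, ?_⟩ (Or.inl fun h => h1 (congrArg Subtype.val h)) ?_
    · exact add_mem (mul_mem (hu t) (hmem t _)) (hmem t _)
    · exact add_mem (add_mem (mul_mem (pow_mem (hu t) 2) (hmem t _))
        (mul_mem (hu t) (hmem t _))) (hmem t _)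
    · show f l₁ * s ^ 2 + (t * f l₂ + f q₁) * s + (t ^ 2 * f l₃ + t * f q₂ + f c) = 0
      linear_combination g.eqF
  · refine trdeg_add_sub f.range k 1 g.tr
      (trdeg_one f.range t s (by rw [Set.pair_comm]; exact g.gen) ?_)
    refine alg_of_quad t ⟨f l₃, hmem s l₃⟩ ⟨s * f l₂ + f q₂, ?_⟩
      ⟨s ^ 2 * f l₁ + s * f q₁ + f c, ?_⟩ (Or.inl fun h => h1 (congrArg Subtype.val h)) ?_
    · exact add_mem (mul_mem (hu s) (hmem s _)) (hmem s _)
    · exact add_mem (add_mem (mul_mem (pow_mem (hu s) 2) (hmem s _))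
        (mul_mem (hu s) (hmem s _))) (hmem s _)
    · show f l₃ * t ^ 2 + (s * f l₂ + f q₂) * t + (s ^ 2 * f l₁ + s * f q₁ + f c) = 0
      linear_combination g.eqF

/-- When the image of `f` has codimension at most one, a nonzero kernel is generated by a prime
element, by unique factorization. -/
lemma exists_prime_gen {k : ℕ} (f : MvPolynomial (Fin (k + 1)) K →ₐ[K] D)
    (h : (k : Cardinal) ≤ Algebra.trdeg K f.range) (p : MvPolynomial (Fin (k + 1)) K)
    (hp : f p = 0) (hp0 : p ≠ 0) : ∃ r, Prime r ∧ f r = 0 ∧ ∀ p, f p = 0 → r ∣ p := by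
  have hpr : (RingHom.ker f).IsPrime := RingHom.ker_isPrime f
  have hne : RingHom.ker f ≠ ⊥ := fun hb => hp0 (by
    have : p ∈ RingHom.ker f := hp
    rw [hb] at this
    simpa using this)
  obtain ⟨r, hr, hrp⟩ := hpr.exists_mem_prime_of_ne_bot hne
  refine ⟨r, hrp, hr, fun p hp => ?_⟩
  have : (Ideal.span {r}).IsPrime := (Ideal.span_singleton_prime hrp.ne_zero).mpr hrp
  have he := ker_principal_of_trdeg f h (Ideal.span {r}) r hrp.ne_zero
    (Ideal.mem_span_singleton_self r) (by rwa [Ideal.span_singleton_le_iff_mem])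
  rw [← Ideal.mem_span_singleton, he]
  exact hp

lemma hom_of_prime_dvd {σ : Type} {d : ℕ} {r p : MvPolynomial σ K} (hr : Prime r)
    (hp : p.IsHomogeneous d) (hp0 : p ≠ 0) (h : r ∣ p) :
    ∃ e, e ≠ 0 ∧ e ≤ d ∧ r.IsHomogeneous e := by
  obtain ⟨h1, h2⟩ := hom_of_dvd hp hp0 h
  refine ⟨_, fun h0 => ?_, h2, h1⟩
  rw [h0] at h1
  obtain ⟨a, rfl⟩ := eq_C_of_hom_zero h1
  have ha : a ≠ 0 := by rintro rfl; exact hr.ne_zero C_0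
  exact hr.not_isUnit ((isUnit_iff_ne_zero.mpr ha).map C)

lemma SmoothData.fam_hom (h : SmoothData l₁ l₂ l₃ q₁ q₂ c) :
    (fam l₁ l₂ l₃ q₁ q₂ c).IsHomogeneous 3 := by
  have hX := fun k : Fin 2 => isHomogeneous_X K (Sum.inl k : Fin 2 ⊕ Fin m)
  refine IsHomogeneous.add (IsHomogeneous.add (IsHomogeneous.add (IsHomogeneous.add
    (IsHomogeneous.add ?_ ?_) ?_) ?_) ?_) h.hc.rename_isHomogeneous
  · exact ((hX 0).pow 2).mul h.hl₁.rename_isHomogeneous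
  · exact ((hX 0).mul (hX 1)).mul h.hl₂.rename_isHomogeneous
  · exact ((hX 1).pow 2).mul h.hl₃.rename_isHomogeneous
  · exact (hX 0).mul h.hq₁.rename_isHomogeneous
  · exact (hX 1).mul h.hq₂.rename_isHomogeneous

/-- In characteristic two `f l₂ = f q₁ = f q₂ = 0`, so these forms are all divisible by one polynomial
`r` without constant term. A common zero of `r` and of the `m` transverse derivatives, which are
`m + 1` equations in `m + 2` unknowns, is a singular point. -/
lemma SmoothData.char_two [IsAlgClosed K] (h2 : (2 : K) = 0) {k : ℕ}
    {l₁ l₂ l₃ q₁ q₂ c : MvPolynomial (Fin (k + 1)) K}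
    {f : MvPolynomial (Fin (k + 1)) K →ₐ[K] D} (h : SmoothData l₁ l₂ l₃ q₁ q₂ c)
    (g : GenericPoint l₁ l₂ l₃ q₁ q₂ c f s t) (hδ : f (4 * l₁ * l₃ - l₂ ^ 2) = 0)
    (htr : (k : Cardinal) ≤ Algebra.trdeg K f.range) : False := by
  classical
  have h2D : (2 : D) = 0 := by
    have := congrArg (algebraMap K D) h2
    rwa [map_ofNat, map_zero] at this
  have hf2 : f l₂ = 0 := by
    simp only [map_sub, map_mul, map_pow, map_ofNat] at hδ
    have : f l₂ ^ 2 = 0 := by linear_combination 2 * f l₁ * f l₃ * h2D - hδ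
    simpa using this
  have hf3 : f q₁ = 0 := by linear_combination g.eqA - t * hf2 - s * f l₁ * h2D
  have hf4 : f q₂ = 0 := by linear_combination g.eqB - s * hf2 - t * f l₃ * h2D
  obtain ⟨r, hr0, hr1, hr2, hr3⟩ : ∃ r : MvPolynomial (Fin (k + 1)) K,
      constantCoeff r = 0 ∧ r ∣ l₂ ∧ r ∣ q₁ ∧ r ∣ q₂ := by
    by_cases hall : l₂ = 0 ∧ q₁ = 0 ∧ q₂ = 0
    · exact ⟨0, by simp, by simp [hall.1], by simp [hall.2.1], by simp [hall.2.2]⟩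
    · obtain ⟨p, hp0, d, hpd, hfp⟩ : ∃ p : MvPolynomial (Fin (k + 1)) K, p ≠ 0 ∧
          ∃ d, p.IsHomogeneous d ∧ f p = 0 := by
        by_contra! hcon
        refine hall ⟨?_, ?_, ?_⟩
        · by_contra h0; exact hcon _ h0 1 h.hl₂ hf2
        · by_contra h0; exact hcon _ h0 2 h.hq₁ hf3
        · by_contra h0; exact hcon _ h0 2 h.hq₂ hf4
      obtain ⟨r, hr, -, hdvd⟩ := exists_prime_gen f htr p hfp hp0
      obtain ⟨e, he, -, hre⟩ := hom_of_prime_dvd hr hpd hp0 (hdvd p hfp)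
      exact ⟨r, const_zero_of_hom he hre, hdvd _ hf2, hdvd _ hf3, hdvd _ hf4⟩
  obtain ⟨x, hx0, hx⟩ := exists_common_zero
    (insert (base r) (Finset.univ.image fun i => pderiv (Sum.inr i) (fam l₁ l₂ l₃ q₁ q₂ c))) (by
      intro p hp
      rw [MvPolynomial.eval_zero]
      rw [Finset.mem_insert, Finset.mem_image] at hp
      rcases hp with rfl | ⟨i, -, rfl⟩
      · rw [constantCoeff_base, hr0]
      · exact const_zero_of_hom two_ne_zero h.fam_hom.pderiv) (by
      refine (Finset.card_insert_le _ _).trans_lt ?_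
      have := (Finset.card_image_le (s := Finset.univ)
        (f := fun i : Fin (k + 1) => pderiv (Sum.inr i) (fam l₁ l₂ l₃ q₁ q₂ c)))
      simp at this ⊢
      omega)
  have hxr : eval x (base r) = 0 := hx _ (by simp)
  have hxG : ∀ i, eval x (pderiv (Sum.inr i) (fam l₁ l₂ l₃ q₁ q₂ c)) = 0 := fun i =>
    hx _ (by simp)
  have hdv : ∀ p, r ∣ p → eval x (base p) = 0 := by
    rintro _ ⟨p, rfl⟩
    rw [map_mul, map_mul, hxr, zero_mul]
  have hall : ∀ i, eval x (pderiv i (fam l₁ l₂ l₃ q₁ q₂ c)) = 0 := by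
    rintro (i | i)
    · fin_cases i
      · simp only [Fin.zero_eta, pderiv_fam_zero, map_add, map_mul, hdv _ hr1, hdv _ hr2,
          map_ofNat, h2]
        ring
      · simp only [Fin.mk_one, pderiv_fam_one, map_add, map_mul, hdv _ hr1, hdv _ hr3,
          map_ofNat, h2]
        ring
    · exact hxG i
  -- Euler's relation gives `3 F = 0`, and `3 = 1` here.
  have hE := congrArg (eval x) h.fam_hom.sum_X_mul_pderiv
  simp only [map_sum, map_mul, hall, mul_zero, Finset.sum_const_zero] at hE
  obtain ⟨i, hi⟩ := h.smooth x hx0 (by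
    simp only [nsmul_eq_mul, map_mul, map_natCast] at hE
    push_cast at hE
    linear_combination -hE - eval x (fam l₁ l₂ l₃ q₁ q₂ c) * h2)
  exact hi (hall i)

/-! ### Degenerate discriminant outside characteristic two -/

/-- Completing the square modulo a linear form `r` which does not divide `l₁`, but divides the
discriminant and two more `2 × 2` minors of the symmetric matrix of the quadratic polynomial. Since `(r, l₁)` is prime, it contains `l₂` and `q₁` with their squares;
the other coefficients follow by cancelling `4 l₁` modulo `r`. -/
lemma rank_one_form {σ : Type} [Fintype σ] [Infinite K] (h2 : (2 : K) ≠ 0)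
    {l₁ l₂ l₃ q₁ q₂ c r : MvPolynomial σ K}
    (hl₁ : l₁.IsHomogeneous 1) (hl₂ : l₂.IsHomogeneous 1)
    (hq₁ : q₁.IsHomogeneous 2) (hc : c.IsHomogeneous 3)
    (hr : r.IsHomogeneous 1) (hrp : Prime r) (hrl : ¬ r ∣ l₁)
    (d1 : r ∣ 4 * l₁ * l₃ - l₂ ^ 2) (d2 : r ∣ 2 * l₁ * q₂ - l₂ * q₁)
    (d3 : r ∣ 4 * l₁ * c - q₁ ^ 2) :
    ∃ (b : K) (a y₂ y₃ e₁ e₂ e : MvPolynomial σ K), a.IsHomogeneous 1 ∧ e.IsHomogeneous 2 ∧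
      l₂ = 2 * C b * l₁ + r * y₂ ∧ l₃ = C b ^ 2 * l₁ + r * y₃ ∧ q₁ = 2 * l₁ * a + r * e₁ ∧
      q₂ = 2 * C b * l₁ * a + r * e₂ ∧ c = l₁ * a ^ 2 + r * e := by
  obtain ⟨w, hw⟩ : ∃ w : K, 2 * w = 1 := ⟨2⁻¹, mul_inv_cancel₀ h2⟩
  have hC : (2 : MvPolynomial σ K) * C w = 1 := by
    rw [← C_1, ← hw, C_mul]; rfl
  have hI : (Ideal.span {r, l₁}).IsPrime := lin_prime_two hr hl₁ hrp.ne_zero (by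
    rintro c rfl; exact hrl (dvd_mul_left _ _))
  have hrI : ∀ p, r ∣ p → p ∈ Ideal.span {r, l₁} := by
    rintro _ ⟨p, rfl⟩
    exact Ideal.mul_mem_right _ _ (Ideal.subset_span (by simp))
  have hlI : l₁ ∈ Ideal.span {r, l₁} := Ideal.subset_span (by simp)
  -- cancellation of `4 l₁` modulo `r`
  have cancel : ∀ p, r ∣ 4 * l₁ * p → r ∣ p := by
    intro p hp
    have : r ∣ l₁ * p := by
      have e : l₁ * p = 4 * l₁ * p * (C w * C w) := by
        linear_combination (-(l₁ * p) * (1 + 2 * C w)) * hC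
      rw [e]; exact hp.mul_right _
    exact (hrp.dvd_or_dvd this).resolve_left hrl
  have hl2I : l₂ ∈ Ideal.span {r, l₁} := by
    apply hI.mem_of_pow_mem 2
    have : l₂ ^ 2 = 4 * l₃ * l₁ - (4 * l₁ * l₃ - l₂ ^ 2) := by ring
    rw [this]
    exact sub_mem (Ideal.mul_mem_left _ _ hlI) (hrI _ d1)
  obtain ⟨y₂, z, -, hz, hy₂⟩ :=
    hom_cofactor_two (j := 0) (j' := 0) hr hl₁ hl₂ rfl rfl hl2I
  obtain ⟨z, rfl⟩ := eq_C_of_hom_zero hz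
  obtain ⟨y₃, hy₃⟩ : r ∣ l₃ - C (w * z) ^ 2 * l₁ := by
    apply cancel
    have e : 4 * l₁ * (l₃ - C (w * z) ^ 2 * l₁) =
        (4 * l₁ * l₃ - l₂ ^ 2) + r * (r * y₂ ^ 2 + 2 * y₂ * l₁ * C z) := by
      rw [hy₂, C_mul]
      linear_combination (-(1 + 2 * C w) * l₁ ^ 2 * C z ^ 2) * hC
    rw [e]
    exact dvd_add d1 (dvd_mul_right _ _)
  have hq1I : q₁ ∈ Ideal.span {r, l₁} := by
    apply hI.mem_of_pow_mem 2
    have : q₁ ^ 2 = 4 * c * l₁ - (4 * l₁ * c - q₁ ^ 2) := by ring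
    rw [this]
    exact sub_mem (Ideal.mul_mem_left _ _ hlI) (hrI _ d3)
  obtain ⟨e₁, u, -, hu, he₁⟩ :=
    hom_cofactor_two (j := 1) (j' := 1) hr hl₁ hq₁ rfl rfl hq1I
  have ha : (C w * u).IsHomogeneous 1 := by
    simpa using (isHomogeneous_C _ w).mul hu
  obtain ⟨e₂, he₂⟩ : r ∣ q₂ - 2 * C (w * z) * l₁ * (C w * u) := by
    apply cancel
    have e : 4 * l₁ * (q₂ - 2 * C (w * z) * l₁ * (C w * u)) =
        2 * (2 * l₁ * q₂ - l₂ * q₁) + r * (2 * (y₂ * q₁ + e₁ * l₁ * C z)) := by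
      rw [hy₂, he₁, C_mul]
      linear_combination (-2 * (1 + 2 * C w) * l₁ ^ 2 * C z * u) * hC
    rw [e]
    exact dvd_add (d2.mul_left _) (dvd_mul_right _ _)
  have hdc : r ∣ c - l₁ * (C w * u) ^ 2 := by
    apply cancel
    have e : 4 * l₁ * (c - l₁ * (C w * u) ^ 2) =
        (4 * l₁ * c - q₁ ^ 2) + r * (e₁ * (r * e₁ + 2 * l₁ * u)) := by
      rw [he₁]
      linear_combination (-(1 + 2 * C w) * l₁ ^ 2 * u ^ 2) * hC
    rw [e]
    exact dvd_add d3 (dvd_mul_right _ _)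
  obtain ⟨e, he, hce⟩ := hom_cofactor (j := 2) hr (hc.sub (hl₁.mul (ha.pow 2))) hdc
  refine ⟨w * z, C w * u, y₂, y₃, e₁, e₂, e, ha, he, ?_, ?_, ?_, ?_, ?_⟩
  · rw [hy₂, C_mul]; linear_combination (-C z * l₁) * hC
  · linear_combination hy₃
  · rw [he₁]; linear_combination (-u * l₁) * hC
  · linear_combination he₂
  · linear_combination hce

/-- In the situation of `rank_one_form` the cubic is `l₁ (x + b y + a)² + r e`, which is singular. Here
`x` and `y` stand for the coordinates on the line, in either order, so that the lemma
applies with `l₁` and `l₃` interchanged. -/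
lemma rank_one_false [IsAlgClosed K] (h2 : (2 : K) ≠ 0) (hm : 2 ≤ m)
    {l₁ l₂ l₃ q₁ q₂ c r : MvPolynomial (Fin m) K}
    (hl₁ : l₁.IsHomogeneous 1) (hl₂ : l₂.IsHomogeneous 1)
    (hq₁ : q₁.IsHomogeneous 2) (hc : c.IsHomogeneous 3)
    (hr : r.IsHomogeneous 1) (hrp : Prime r) (hrl : ¬ r ∣ l₁)
    (d1 : r ∣ 4 * l₁ * l₃ - l₂ ^ 2) (d2 : r ∣ 2 * l₁ * q₂ - l₂ * q₁)
    (d3 : r ∣ 4 * l₁ * c - q₁ ^ 2) (x y F : MvPolynomial (Fin 2 ⊕ Fin m) K)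
    (hx : constantCoeff x = 0) (hy : constantCoeff y = 0)
    (hF : F = x ^ 2 * base l₁ + x * y * base l₂ + y ^ 2 * base l₃ + x * base q₁ + y * base q₂
      + base c)
    (hsm : ∀ v : Fin 2 ⊕ Fin m → K, v ≠ 0 → eval v F = 0 → ∃ i, eval v (pderiv i F) ≠ 0) :
    False := by
  classical
  obtain ⟨b, a, y₂, y₃, e₁, e₂, e, ha, he, rfl, rfl, rfl, rfl, rfl⟩ :=
    rank_one_form h2 hl₁ hl₂ hq₁ hc hr hrp hrl d1 d2 d3
  have hF' : F = base l₁ * ((x + C b * y + base a) * (x + C b * y + base a)) + base r *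
      (x * y * base y₂ + y ^ 2 * base y₃ + x * base e₁ + y * base e₂ + base e) := by
    rw [hF]
    simp only [map_add, map_mul, map_pow, map_ofNat, rename_C]
    ring
  refine false_of_mem_sq F hsm {x + C b * y + base a, base r,
    x * y * base y₂ + y ^ 2 * base y₃ + x * base e₁ + y * base e₂ + base e} ?_ ?_ ?_
  · intro p hp
    simp only [Finset.mem_insert, Finset.mem_singleton] at hp
    rw [MvPolynomial.eval_zero]
    rcases hp with rfl | rfl | rfl
    · simp only [map_add, map_mul, constantCoeff_base, hx, hy, const_zero_of_hom one_ne_zero ha]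
      ring
    · rw [constantCoeff_base, const_zero_of_hom one_ne_zero hr]
    · simp only [map_add, map_mul, map_pow, constantCoeff_base, hx, hy,
        const_zero_of_hom two_ne_zero he]
      ring
  · refine Finset.card_le_three.trans_lt ?_
    simp; omega
  · rw [hF']
    refine add_mem (Ideal.mul_mem_left _ _ ?_) ?_ <;>
    exact Ideal.mul_mem_mul (Ideal.subset_span (by simp)) (Ideal.subset_span (by simp))

/-- If `ker f` is generated by the discriminant `δ`, the critical point of the quadratic polynomial in
`(s, t)` is `(-a, -b)` with `a, b` linear forms in `y`, and its critical value is divisible by `δ`. The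
cubic is then a quadratic form in `s + a, t + b` plus `δ n`, which is singular. -/
lemma rank_two_false [IsAlgClosed K] (h2 : (2 : K) ≠ 0) (hm : 3 ≤ m)
    {f : MvPolynomial (Fin m) K →ₐ[K] D} (h : SmoothData l₁ l₂ l₃ q₁ q₂ c)
    (g : GenericPoint l₁ l₂ l₃ q₁ q₂ c f s t) (hδ0 : 4 * l₁ * l₃ - l₂ ^ 2 ≠ 0)
    (d1 : 4 * l₁ * l₃ - l₂ ^ 2 ∣ 2 * l₁ * q₂ - l₂ * q₁)
    (d2 : 4 * l₁ * l₃ - l₂ ^ 2 ∣ 2 * l₃ * q₁ - l₂ * q₂)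
    (hdvd : ∀ p, f p = 0 → 4 * l₁ * l₃ - l₂ ^ 2 ∣ p) : False := by
  classical
  have hδhom : (4 * l₁ * l₃ - l₂ ^ 2).IsHomogeneous 2 := by
    have h4 : (4 : MvPolynomial (Fin m) K).IsHomogeneous 0 := isHomogeneous_C _ (4 : K)
    exact ((h4.mul h.hl₁).mul h.hl₃).sub (h.hl₂.pow 2)
  have h2h : (2 : MvPolynomial (Fin m) K).IsHomogeneous 0 := isHomogeneous_C _ (2 : K)
  obtain ⟨b, hb, eb⟩ := hom_cofactor (j := 1) hδhom
    (((h2h.mul h.hl₁).mul h.hq₂).sub (h.hl₂.mul h.hq₁)) d1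
  obtain ⟨a, ha, ea⟩ := hom_cofactor (j := 1) hδhom
    (((h2h.mul h.hl₃).mul h.hq₁).sub (h.hl₂.mul h.hq₂)) d2
  have eq1 : q₁ = 2 * l₁ * a + l₂ * b := by
    apply mul_left_cancel₀ hδ0
    linear_combination 2 * l₁ * ea + l₂ * eb
  have eq2 : q₂ = l₂ * a + 2 * l₃ * b := by
    apply mul_left_cancel₀ hδ0
    linear_combination 2 * l₃ * eb + l₂ * ea
  have h2D : (2 : D) ≠ 0 := by
    intro h0
    apply h2
    apply (algebraMap K D).injective
    rw [map_ofNat, map_zero, h0]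
  have hc' : f (c - (l₁ * a ^ 2 + l₂ * a * b + l₃ * b ^ 2)) = 0 := by
    have e1 := congrArg f eq1
    have e2 := congrArg f eq2
    simp only [map_add, map_mul, map_ofNat] at e1 e2
    simp only [map_sub, map_add, map_mul, map_pow]
    have : 2 * (f c - (f l₁ * f a ^ 2 + f l₂ * f a * f b + f l₃ * f b ^ 2)) = 0 := by
      linear_combination 2 * g.eqF - (s + f a) * g.eqA - (t + f b) * g.eqB
        + (f a - s) * e1 + (f b - t) * e2
    exact (mul_eq_zero.mp this).resolve_left h2D
  obtain ⟨n, hn, en⟩ := hom_cofactor (j := 1) hδhom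
    (h.hc.sub (((h.hl₁.mul (ha.pow 2)).add ((h.hl₂.mul ha).mul hb)).add
      (h.hl₃.mul (hb.pow 2)))) (hdvd _ hc')
  have ec : c = l₁ * a ^ 2 + l₂ * a * b + l₃ * b ^ 2 + (4 * l₁ * l₃ - l₂ ^ 2) * n := by
    linear_combination en
  have hF : fam l₁ l₂ l₃ q₁ q₂ c =
      base l₁ * ((X (Sum.inl 0) + base a) * (X (Sum.inl 0) + base a))
      + base l₂ * ((X (Sum.inl 0) + base a) * (X (Sum.inl 1) + base b))
      + base l₃ * ((X (Sum.inl 1) + base b) * (X (Sum.inl 1) + base b))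
      + base (4 * l₁ * l₃ - l₂ ^ 2) * base n := by
    conv_lhs => rw [eq1, eq2, ec]
    simp only [fam, map_add, map_mul, map_pow, map_ofNat]
    ring
  refine false_of_mem_sq _ h.smooth {X (Sum.inl 0) + base a, X (Sum.inl 1) + base b,
    base (4 * l₁ * l₃ - l₂ ^ 2), base n} ?_ ?_ ?_
  · intro p hp
    simp only [Finset.mem_insert, Finset.mem_singleton] at hp
    rw [MvPolynomial.eval_zero]
    rcases hp with rfl | rfl | rfl | rfl
    · rw [map_add, constantCoeff_base, const_zero_of_hom one_ne_zero ha, constantCoeff_X, add_zero]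
    · rw [map_add, constantCoeff_base, const_zero_of_hom one_ne_zero hb, constantCoeff_X, add_zero]
    · rw [constantCoeff_base, const_zero_of_hom two_ne_zero hδhom]
    · rw [constantCoeff_base, const_zero_of_hom one_ne_zero hn]
  · refine Finset.card_le_four.trans_lt ?_
    simp; omega
  · rw [hF]
    refine add_mem (add_mem (add_mem (Ideal.mul_mem_left _ _ ?_) (Ideal.mul_mem_left _ _ ?_))
      (Ideal.mul_mem_left _ _ ?_)) ?_ <;>
    exact Ideal.mul_mem_mul (Ideal.subset_span (by simp)) (Ideal.subset_span (by simp))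
/-- For `m = k + 2 ≥ 3`, the cone where a smooth cubic containing the line and its two derivatives
along the line vanish has dimension less than `m`. -/
lemma SmoothData.no_generic [IsAlgClosed K] {k : ℕ} (hk : 1 ≤ k)
    {l₁ l₂ l₃ q₁ q₂ c : MvPolynomial (Fin (k + 2)) K}
    {f : MvPolynomial (Fin (k + 2)) K →ₐ[K] D} (h : SmoothData l₁ l₂ l₃ q₁ q₂ c)
    (g : GenericPoint l₁ l₂ l₃ q₁ q₂ c f s t) : False := by
  have hδ := h.disc_eq_zero g
  by_cases hl : f l₁ = 0 ∧ f l₃ = 0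
  · exact h.not_all_mem hk g hδ hl.1 hl.2
  rw [not_and_or] at hl
  have htr := trdeg_of_leading g hl
  by_cases h2 : (2 : K) = 0
  · exact h.char_two h2 g hδ htr
  have h4 : (4 : MvPolynomial (Fin (k + 2)) K) ≠ 0 := by
    have : (4 : MvPolynomial (Fin (k + 2)) K) = C (2 * 2) := by
      rw [show (2 * 2 : K) = 4 by norm_num]; rfl
    rw [this, Ne, C_eq_zero]
    exact mul_ne_zero h2 h2
  have hl1 : l₁ ≠ 0 := by simpa using h.net 1 0 (by simp)
  have hδ0 : 4 * l₁ * l₃ - l₂ ^ 2 ≠ 0 := by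
    intro h0
    have hpr : Prime l₁ := (Ideal.span_singleton_prime hl1).mp (lin_prime_one h.hl₁ hl1)
    have hd : l₁ ∣ l₂ := by
      apply hpr.dvd_of_dvd_pow (n := 2)
      exact ⟨4 * l₃, by linear_combination -h0⟩
    obtain ⟨β, rfl⟩ := eq_C_mul_of_dvd h.hl₁ h.hl₂ hd
    have h3 : 4 * l₃ = C β ^ 2 * l₁ := by
      apply mul_left_cancel₀ hl1
      linear_combination h0
    apply h.net (-β) 2 (Or.inr h2)
    simp only [map_mul, map_pow, map_neg, map_ofNat]
    linear_combination h3
  have hδ' := hδ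
  simp only [map_sub, map_mul, map_pow, map_ofNat] at hδ'
  have m1 : f (2 * l₁ * q₂ - l₂ * q₁) = 0 := by
    simp only [map_sub, map_mul, map_ofNat]
    linear_combination 2 * f l₁ * g.eqB - f l₂ * g.eqA - t * hδ'
  have m2 : f (2 * l₃ * q₁ - l₂ * q₂) = 0 := by
    simp only [map_sub, map_mul, map_ofNat]
    linear_combination 2 * f l₃ * g.eqA - f l₂ * g.eqB - s * hδ'
  have m1' := m1
  have m2' := m2
  simp only [map_sub, map_mul, map_ofNat] at m1' m2'
  have m3 : f (4 * l₁ * c - q₁ ^ 2) = 0 := by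
    simp only [map_sub, map_mul, map_pow, map_ofNat]
    linear_combination 4 * f l₁ * g.eqF - (2 * s * f l₁ + t * f l₂ + f q₁) * g.eqA
      - t ^ 2 * hδ' - 2 * t * m1'
  have m4 : f (4 * l₃ * c - q₂ ^ 2) = 0 := by
    simp only [map_sub, map_mul, map_pow, map_ofNat]
    linear_combination 4 * f l₃ * g.eqF - (2 * t * f l₃ + s * f l₂ + f q₂) * g.eqB
      - s ^ 2 * hδ' - 2 * s * m2'
  obtain ⟨r, hrp, hfr, hdvd⟩ := exists_prime_gen f htr _ hδ hδ0
  have hδhom : (4 * l₁ * l₃ - l₂ ^ 2).IsHomogeneous 2 := by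
    have h4 : (4 : MvPolynomial (Fin (k + 2)) K).IsHomogeneous 0 := isHomogeneous_C _ (4 : K)
    exact ((h4.mul h.hl₁).mul h.hl₃).sub (h.hl₂.pow 2)
  obtain ⟨e, he0, he2, hre⟩ := hom_of_prime_dvd hrp hδhom hδ0 (hdvd _ hδ)
  obtain rfl | rfl : e = 1 ∨ e = 2 := by omega
  · rcases hl with hl | hl
    · refine rank_one_false h2 (by omega) h.hl₁ h.hl₂ h.hq₁ h.hc hre hrp ?_
        (hdvd _ hδ) (hdvd _ m1) (hdvd _ m3) (X (Sum.inl 0)) (X (Sum.inl 1)) _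
        (constantCoeff_X _ _) (constantCoeff_X _ _) rfl h.smooth
      rintro ⟨p, rfl⟩
      exact hl (by rw [map_mul, hfr, zero_mul])
    · refine rank_one_false (l₃ := l₁) h2 (by omega) h.hl₃ h.hl₂ h.hq₂ h.hc hre hrp ?_
        (by convert hdvd _ hδ using 1; ring) (hdvd _ m2) (hdvd _ m4) (X (Sum.inl 1))
        (X (Sum.inl 0)) _
        (constantCoeff_X _ _) (constantCoeff_X _ _) (by rw [fam]; ring) h.smooth
      rintro ⟨p, rfl⟩
      exact hl (by rw [map_mul, hfr, zero_mul])
  -- Here `r` and `δ` have the same degree, so they differ by a unit.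
  · obtain ⟨a, ha⟩ := eq_C_mul_of_dvd hre hδhom (hdvd _ hδ)
    have ha0 : a ≠ 0 := by rintro rfl; apply hδ0; rw [ha, C_0, zero_mul]
    have hδdvd : ∀ p, f p = 0 → 4 * l₁ * l₃ - l₂ ^ 2 ∣ p := by
      intro p hp
      rw [ha]
      exact ((isUnit_iff_ne_zero.mpr ha0).map C).mul_left_dvd.mpr (hdvd p hp)
    exact rank_two_false h2 (by omega) h g hδ0 (hδdvd _ m1) (hδdvd _ m2) hδdvd

/-! ### Existence of a smooth section -/

lemma eval_smul_of_hom {σ : Type} {d : ℕ} {p : MvPolynomial σ K} (hp : p.IsHomogeneous d)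
    (μ : K) (x : σ → K) : eval (μ • x) p = μ ^ d * eval x p := by
  rw [eval_eq, eval_eq, Finset.mul_sum]
  refine Finset.sum_congr rfl fun e he => ?_
  have h1 : e.degree = d := by
    rw [Finsupp.degree_eq_weight_one]; exact hp (mem_support_iff.mp he)
  simp only [Pi.smul_apply, smul_eq_mul, mul_pow, Finset.prod_mul_distrib]
  rw [Finset.prod_pow_eq_pow_sum, show ∑ i ∈ e.support, e i = d from h1]
  ring

/-- In adapted coordinates: some `η` is proportional to the transverse gradient of the cubic at no
nonzero point where the cubic and its derivatives along the line vanish. -/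
theorem SmoothData.exists_section [IsAlgClosed K] (h : SmoothData l₁ l₂ l₃ q₁ q₂ c)
    (hm : 3 ≤ m) : ∃ η : Fin m → K, η ≠ 0 ∧ ∀ x : Fin 2 ⊕ Fin m → K, x ≠ 0 →
      eval x (fam l₁ l₂ l₃ q₁ q₂ c) = 0 →
      eval x (pderiv (Sum.inl 0) (fam l₁ l₂ l₃ q₁ q₂ c)) = 0 →
      eval x (pderiv (Sum.inl 1) (fam l₁ l₂ l₃ q₁ q₂ c)) = 0 →
      ¬ ∃ lam : K, ∀ i, eval x (pderiv (Sum.inr i) (fam l₁ l₂ l₃ q₁ q₂ c)) = lam * η i := by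
  by_contra! hcon
  obtain ⟨F, hFdef⟩ : ∃ F, F = fam l₁ l₂ l₃ q₁ q₂ c := ⟨_, rfl⟩
  have hsm := h.smooth
  have hhom := h.fam_hom
  rw [← hFdef] at hcon hsm hhom
  obtain ⟨P, hP, hJP, hind⟩ := exists_generic
    (Ideal.span {F, pderiv (Sum.inl 0) F, pderiv (Sum.inl 1) F})
    (fun i : Fin m => pderiv (Sum.inr i) F) (by
      intro a
      suffices ∃ x : Fin 2 ⊕ Fin m → K, eval x F = 0 ∧ eval x (pderiv (Sum.inl 0) F) = 0 ∧
          eval x (pderiv (Sum.inl 1) F) = 0 ∧ ∀ i, eval x (pderiv (Sum.inr i) F) = a i by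
        obtain ⟨x, h1, h2, h3, h4⟩ := this
        refine ⟨x, ?_, h4⟩
        rw [zeroLocus_span]
        rintro p (rfl | rfl | rfl) <;> simpa [coe_aeval_eq_eval]
      by_cases ha : a = 0
      · exact ⟨0, eval_zero_of_hom three_ne_zero hhom, eval_zero_of_hom two_ne_zero hhom.pderiv,
          eval_zero_of_hom two_ne_zero hhom.pderiv, fun i => by
            rw [eval_zero_of_hom two_ne_zero hhom.pderiv, ha]; rfl⟩
      obtain ⟨x, hx0, hxF, hxA, hxB, lam, hlam⟩ := hcon a ha
      have hlam0 : lam ≠ 0 := by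
        rintro rfl
        obtain ⟨i, hi⟩ := hsm x hx0 hxF
        rcases i with i | i
        · fin_cases i
          · exact hi hxA
          · exact hi hxB
        · exact hi (by rw [hlam, zero_mul])
      -- The gradient is quadratic, so scaling the point by `μ` with `μ² = lam⁻¹` makes it equal to `a`.
      obtain ⟨μ, hμ⟩ := IsAlgClosed.exists_eq_mul_self lam⁻¹
      refine ⟨μ • x, ?_, ?_, ?_, fun i => ?_⟩
      · rw [eval_smul_of_hom hhom, hxF, mul_zero]
      · rw [eval_smul_of_hom hhom.pderiv, hxA, mul_zero]
      · rw [eval_smul_of_hom hhom.pderiv, hxB, mul_zero]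
      · rw [eval_smul_of_hom hhom.pderiv, hlam]
        have : μ ^ 2 * lam = 1 := by
          rw [pow_two, ← hμ, inv_mul_cancel₀ hlam0]
        linear_combination a i * this)
  obtain ⟨k, rfl⟩ : ∃ k, m = k + 2 := ⟨m - 2, by omega⟩
  let π := Ideal.Quotient.mkₐ K P
  have hπ : ∀ p ∈ Ideal.span {F, pderiv (Sum.inl 0) F, pderiv (Sum.inl 1) F}, π p = 0 := by
    intro p hp
    exact Ideal.Quotient.eq_zero_iff_mem.mpr (hJP hp)
  have g : GenericPoint l₁ l₂ l₃ q₁ q₂ c (π.comp base) (π (X (Sum.inl 0)))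
      (π (X (Sum.inl 1))) := by
    refine ⟨?_, ?_, ?_, ?_, ?_⟩
    · have := hπ F (Ideal.subset_span (by simp))
      rw [hFdef] at this
      simp only [fam, map_add, map_mul, map_pow] at this
      exact this
    · have := hπ (pderiv (Sum.inl 0) F) (Ideal.subset_span (by simp))
      rw [hFdef, pderiv_fam_zero] at this
      simp only [map_add, map_mul, map_ofNat] at this
      exact this
    · have := hπ (pderiv (Sum.inl 1) F) (Ideal.subset_span (by simp))
      rw [hFdef, pderiv_fam_one] at this
      simp only [map_add, map_mul, map_ofNat] at this
      exact this
    · rw [eq_top_iff]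
      rintro d -
      obtain ⟨p, rfl⟩ := Ideal.Quotient.mkₐ_surjective K P d
      change π p ∈ _
      induction p using MvPolynomial.induction_on with
      | C a =>
        exact Subalgebra.algebraMap_mem (Algebra.adjoin (π.comp base).range _)
          (⟨π (C a), C a, by simp⟩ : (π.comp base).range)
      | add p q hp hq => rw [map_add]; exact add_mem hp hq
      | mul_X p i hp =>
        rw [map_mul]
        refine mul_mem hp ?_
        rcases i with i | i
        · apply Algebra.subset_adjoin
          fin_cases i <;> simp
        · exact Subalgebra.algebraMap_mem (Algebra.adjoin (π.comp base).range _)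
            (⟨π (X (Sum.inr i)), X i, by simp⟩ : (π.comp base).range)
    · simpa using hind.cardinalMk_le_trdeg
  exact h.no_generic (by omega) g

end core

/-! ### Cubic forms vanishing on a coordinate plane -/

section reduction
variable {K : Type} [Field K] {m : ℕ}

lemma split_one {p : MvPolynomial (Fin 2 ⊕ Fin m) K} (hp : p.IsHomogeneous 1) :
    ∃ (a b : K) (l : MvPolynomial (Fin m) K), l.IsHomogeneous 1 ∧
      p = C a * X (Sum.inl 0) + C b * X (Sum.inl 1) + base l := by
  obtain ⟨a, rfl⟩ := lin_repr hp
  refine ⟨a (Sum.inl 0), a (Sum.inl 1), ∑ i, C (a (Sum.inr i)) * X i, ?_, ?_⟩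
  · refine IsHomogeneous.sum _ _ _ fun i _ => ?_
    simpa using (isHomogeneous_C _ (a (Sum.inr i))).mul (isHomogeneous_X K i)
  · simp [Fintype.sum_sum_type, Fin.sum_univ_two]

lemma split_two {p : MvPolynomial (Fin 2 ⊕ Fin m) K} (hp : p.IsHomogeneous 2) :
    ∃ (a b d : K) (l₁ l₂ q : MvPolynomial (Fin m) K), l₁.IsHomogeneous 1 ∧ l₂.IsHomogeneous 1 ∧
      q.IsHomogeneous 2 ∧
      p = C a * X (Sum.inl 0) ^ 2 + C b * (X (Sum.inl 0) * X (Sum.inl 1))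
        + C d * X (Sum.inl 1) ^ 2 + X (Sum.inl 0) * base l₁ + X (Sum.inl 1) * base l₂
        + base q := by
  have hp' : p ∈ homogeneousSubmodule (Fin 2 ⊕ Fin m) K 1 ^ 2 := by
    rw [homogeneousSubmodule_one_pow]; exact hp
  rw [pow_two] at hp'
  clear hp
  induction hp' using Submodule.mul_induction_on' with
  | mem_mul_mem p hp q hq =>
    obtain ⟨a, b, l, hl, rfl⟩ := split_one hp
    obtain ⟨a', b', l', hl', rfl⟩ := split_one hq
    refine ⟨a * a', a * b' + b * a', b * b', C a * l' + C a' * l, C b * l' + C b' * l, l * l',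
      ?_, ?_, hl.mul hl', ?_⟩
    · simpa using ((isHomogeneous_C _ a).mul hl').add ((isHomogeneous_C _ a').mul hl)
    · simpa using ((isHomogeneous_C _ b).mul hl').add ((isHomogeneous_C _ b').mul hl)
    · simp only [map_add, map_mul, rename_C]; ring
  | add p hp q hq ihp ihq =>
    obtain ⟨a, b, d, l₁, l₂, r, h1, h2, h3, rfl⟩ := ihp
    obtain ⟨a', b', d', l₁', l₂', r', h1', h2', h3', rfl⟩ := ihq
    refine ⟨a + a', b + b', d + d', l₁ + l₁', l₂ + l₂', r + r', h1.add h1', h2.add h2',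
      h3.add h3', ?_⟩
    simp only [map_add]; ring

lemma split_three {p : MvPolynomial (Fin 2 ⊕ Fin m) K} (hp : p.IsHomogeneous 3) :
    ∃ (a b d e : K) (l₁ l₂ l₃ q₁ q₂ c : MvPolynomial (Fin m) K),
      (l₁.IsHomogeneous 1 ∧ l₂.IsHomogeneous 1 ∧ l₃.IsHomogeneous 1 ∧
        q₁.IsHomogeneous 2 ∧ q₂.IsHomogeneous 2 ∧ c.IsHomogeneous 3) ∧
      p = C a * X (Sum.inl 0) ^ 3 + C b * (X (Sum.inl 0) ^ 2 * X (Sum.inl 1))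
        + C d * (X (Sum.inl 0) * X (Sum.inl 1) ^ 2) + C e * X (Sum.inl 1) ^ 3
        + fam l₁ l₂ l₃ q₁ q₂ c := by
  have hp' : p ∈ homogeneousSubmodule (Fin 2 ⊕ Fin m) K 1 ^ 3 := by
    rw [homogeneousSubmodule_one_pow]; exact hp
  rw [pow_succ, homogeneousSubmodule_one_pow] at hp'
  clear hp
  induction hp' using Submodule.mul_induction_on' with
  | mem_mul_mem p hp q hq =>
    obtain ⟨a, b, d, l₁, l₂, r, h1, h2, h3, rfl⟩ := split_two hp
    obtain ⟨a', b', l', hl', rfl⟩ := split_one hq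
    have hC : ∀ (k : K) {s : MvPolynomial (Fin m) K} {j : ℕ}, s.IsHomogeneous j →
        (C k * s).IsHomogeneous j := fun k s j hs => by
      simpa using (isHomogeneous_C _ k).mul hs
    refine ⟨a * a', a * b' + b * a', b * b' + d * a', d * b',
      C a * l' + C a' * l₁, C b * l' + C b' * l₁ + C a' * l₂, C d * l' + C b' * l₂,
      l₁ * l' + C a' * r, l₂ * l' + C b' * r, r * l',
      ⟨(hC _ hl').add (hC _ h1), ((hC _ hl').add (hC _ h1)).add (hC _ h2),
        (hC _ hl').add (hC _ h2), (h1.mul hl').add (hC _ h3), (h2.mul hl').add (hC _ h3),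
        h3.mul hl'⟩, ?_⟩
    simp only [fam, map_add, map_mul, rename_C]; ring
  | add p hp q hq ihp ihq =>
    obtain ⟨a, b, d, e, l₁, l₂, l₃, q₁, q₂, c, ⟨h1, h2, h3, h4, h5, h6⟩, rfl⟩ := ihp
    obtain ⟨a', b', d', e', l₁', l₂', l₃', q₁', q₂', c', ⟨h1', h2', h3', h4', h5', h6'⟩, rfl⟩ := ihq
    refine ⟨a + a', b + b', d + d', e + e', l₁ + l₁', l₂ + l₂', l₃ + l₃', q₁ + q₁', q₂ + q₂',
      c + c', ⟨h1.add h1', h2.add h2', h3.add h3', h4.add h4', h5.add h5', h6.add h6'⟩, ?_⟩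
    simp only [fam, map_add]; ring

/-- A cubic form vanishing on the plane `y = 0` has the shape `fam`. -/
lemma exists_fam_of_vanish [Infinite K] {p : MvPolynomial (Fin 2 ⊕ Fin m) K}
    (hp : p.IsHomogeneous 3)
    (hv : ∀ x : Fin 2 ⊕ Fin m → K, (∀ i, x (Sum.inr i) = 0) → eval x p = 0) :
    ∃ (l₁ l₂ l₃ q₁ q₂ c : MvPolynomial (Fin m) K),
      (l₁.IsHomogeneous 1 ∧ l₂.IsHomogeneous 1 ∧ l₃.IsHomogeneous 1 ∧
        q₁.IsHomogeneous 2 ∧ q₂.IsHomogeneous 2 ∧ c.IsHomogeneous 3) ∧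
      p = fam l₁ l₂ l₃ q₁ q₂ c := by
  obtain ⟨a, b, d, e, l₁, l₂, l₃, q₁, q₂, c, ⟨h1, h2, h3, h4, h5, h6⟩, rfl⟩ := split_three hp
  refine ⟨l₁, l₂, l₃, q₁, q₂, c, ⟨h1, h2, h3, h4, h5, h6⟩, ?_⟩
  have key : ∀ s t : K, a * s ^ 3 + b * (s ^ 2 * t) + d * (s * t ^ 2) + e * t ^ 3 = 0 := by
    intro s t
    have := hv (Sum.elim ![s, t] 0) (fun i => rfl)
    rw [map_add, eval_fam l₁ l₂ l₃ q₁ q₂ c _ 0 rfl, eval_zero_of_hom one_ne_zero h1,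
      eval_zero_of_hom one_ne_zero h2, eval_zero_of_hom one_ne_zero h3,
      eval_zero_of_hom two_ne_zero h4, eval_zero_of_hom two_ne_zero h5,
      eval_zero_of_hom three_ne_zero h6] at this
    simpa using this
  have ha : a = 0 := by simpa using key 1 0
  have he : e = 0 := by simpa using key 0 1
  subst ha he
  have h11 := key 1 1
  classical
  obtain ⟨t, ht⟩ := Infinite.exists_notMem_finset ({0, 1} : Finset K)
  simp only [Finset.mem_insert, Finset.mem_singleton, not_or] at ht
  have h1t := key 1 t
  have hd : d = 0 := by
    have : d * (t * (t - 1)) = 0 := by linear_combination h1t - t * h11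
    simpa [ht.1, sub_eq_zero, ht.2] using this
  subst hd
  have hb : b = 0 := by simpa using h11
  subst hb
  simp

end reduction

/-! ### Change of coordinates and conclusion -/

section coordinates
variable {K σ τ : Type} [Field K] [Fintype σ]

/-- Substitution of the linear change of coordinates `x ↦ ∑ i, x i • b i` into a polynomial. -/
noncomputable def changeCoords (b : σ → τ → K) : MvPolynomial τ K →ₐ[K] MvPolynomial σ K :=
  aeval fun j => ∑ i, C (b i j) * X i

lemma changeCoords_hom (b : σ → τ → K) {F : MvPolynomial τ K} {d : ℕ} (hF : F.IsHomogeneous d) :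
    (changeCoords b F).IsHomogeneous d := by
  have := hF.aeval (n := 1) (fun j => ∑ i, C (b i j) * X i) (fun j =>
    IsHomogeneous.sum _ _ _ fun i _ => by
      simpa using (isHomogeneous_C _ (b i j)).mul (isHomogeneous_X K i))
  simpa [changeCoords] using this

lemma eval_changeCoords (b : σ → τ → K) (F : MvPolynomial τ K) (x : σ → K) :
    eval x (changeCoords b F) = eval (∑ i, x i • b i) F := by
  induction F using MvPolynomial.induction_on with
  | C a => simp [changeCoords]
  | add p q hp hq => simp only [map_add, hp, hq]
  | mul_X p j hp =>
    rw [map_mul, map_mul, hp, map_mul]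
    congr 1
    simp [changeCoords, mul_comm]

/-- The chain rule for a linear change of coordinates. -/
lemma eval_pderiv_changeCoords [Fintype τ] [DecidableEq σ] (b : σ → τ → K) (F : MvPolynomial τ K) (x : σ → K) (k : σ) :
    eval x (pderiv k (changeCoords b F)) = ∑ j, b k j * eval (∑ i, x i • b i) (pderiv j F) := by
  classical
  induction F using MvPolynomial.induction_on with
  | C a => simp [changeCoords]
  | add p q hp hq => simp only [map_add, hp, hq, mul_add, Finset.sum_add_distrib]
  | mul_X p j hp =>
    have hX : changeCoords b (X j) = ∑ i, C (b i j) * X i := by simp [changeCoords]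
    have hd : pderiv k (∑ i, C (b i j) * X i : MvPolynomial σ K) = C (b k j) := by
      simp [Pi.single_apply, pderiv_X]
    rw [map_mul, Derivation.leibniz, hX, hd, ← hX]
    simp only [smul_eq_mul, map_add, map_mul, hp, eval_changeCoords, Derivation.leibniz, pderiv_X,
      eval_C, mul_add, Finset.sum_add_distrib, eval_X]
    congr 1
    · rw [Finset.sum_eq_single j]
      · simp; ring
      · intro i _ hij; simp [hij.symm]
      · simp
    · rw [Finset.mul_sum]
      exact Finset.sum_congr rfl fun i _ => by ring

end coordinates

/-- Let `K` be algebraically closed, `n ≥ 4`, and `F` a cubic form in `n+1`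
variables with smooth zero locus `X = V(F) ⊂ P^n`. Let `W` be a 2-dimensional linear subspace
of `K^{n+1}` on which `F` vanishes (a line `L ⊂ X`). Then there is a nonzero linear form `h`
(given by its coefficient vector) vanishing on `W` such that the hyperplane section
`X ∩ V(h)` is smooth: at every nonzero `v` with `F(v) = h(v) = 0`, the gradient `∇F(v)` is
not a scalar multiple of `h`. -/
theorem stmt_11 (K : Type) [Field K] [IsAlgClosed K]
    (n : ℕ) (hn : 4 ≤ n) (F : MvPolynomial (Fin (n + 1)) K)
    (hF : F ≠ 0) (hhom : F.IsHomogeneous 3)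
    (hsmooth : ∀ v : Fin (n + 1) → K, v ≠ 0 → eval v F = 0 →
      ∃ i, eval v (pderiv i F) ≠ 0)

    (W : Submodule K (Fin (n + 1) → K)) (hW : Module.finrank K W = 2)
    (hFW : ∀ w ∈ W, eval w F = 0) :
    ∃ h : Fin (n + 1) → K, h ≠ 0 ∧ (∀ w ∈ W, ∑ i, h i * w i = 0) ∧
      ∀ v : Fin (n + 1) → K, v ≠ 0 → eval v F = 0 → (∑ i, h i * v i) = 0 →
        ¬ ∃ lam : K, ∀ i, eval v (pderiv i F) = lam * h i := by
  obtain ⟨m, rfl⟩ : ∃ m, n = m + 1 := ⟨n - 1, by omega⟩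
  obtain ⟨W', hc⟩ := Submodule.exists_isCompl W
  have hW' : Module.finrank K W' = m := by
    have := Submodule.finrank_add_eq_of_isCompl hc
    rw [hW, Module.finrank_fin_fun] at this
    omega
  let bW := Module.finBasisOfFinrankEq K W hW
  let bW' := Module.finBasisOfFinrankEq K W' hW'
  let b : Module.Basis (Fin 2 ⊕ Fin m) K (Fin (m + 1 + 1) → K) :=
    (bW.prod bW').map (Submodule.prodEquivOfIsCompl W W' hc)
  have hbl : ∀ k, b (Sum.inl k) ∈ W := fun k => by simp [b]
  have hbW : ∀ w ∈ W, ∀ i, b.repr w (Sum.inr i) = 0 := by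
    intro w hw i
    have : (Submodule.prodEquivOfIsCompl W W' hc).symm w = (⟨w, hw⟩, 0) :=
      Submodule.prodEquivOfIsCompl_symm_apply_left W W' hc ⟨w, hw⟩
    simp [b, this]
  -- `b` is a basis, so a vector orthogonal to every `b i` is zero.
  have horth : ∀ g : Fin (m + 1 + 1) → K, (∀ i, ∑ j, b i j * g j = 0) → g = 0 := by
    intro g hg
    let φ : (Fin (m + 1 + 1) → K) →ₗ[K] K := ∑ j, g j • LinearMap.proj j
    have hφ : ∀ v, φ v = ∑ j, v j * g j := fun v => by simp [φ, mul_comm]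
    have h0 : φ = 0 := b.ext fun i => by rw [hφ, hg]; rfl
    funext j
    have := hφ (Pi.single j 1)
    rw [h0] at this
    simpa [Pi.single_apply] using this.symm
  have hev : ∀ x, eval x (changeCoords b F) = eval (∑ i, x i • b i) F := eval_changeCoords b F
  have hx0 : ∀ x : Fin 2 ⊕ Fin m → K, x ≠ 0 → ∑ i, x i • b i ≠ 0 := by
    intro x hx h
    exact hx (funext fun i => Fintype.linearIndependent_iff.mp b.linearIndependent x h i)
  obtain ⟨l₁, l₂, l₃, q₁, q₂, c, ⟨h1, h2, h3, h4, h5, h6⟩, hfam⟩ :=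
    exists_fam_of_vanish (changeCoords_hom b hhom) (fun x hx => by
      rw [hev]
      refine hFW _ (Submodule.sum_mem _ fun i _ => ?_)
      rcases i with k | i
      · exact W.smul_mem _ (hbl k)
      · rw [hx i, zero_smul]; exact W.zero_mem)
  have hdata : SmoothData l₁ l₂ l₃ q₁ q₂ c := by
    refine ⟨h1, h2, h3, h4, h5, h6, fun x hx hxF => ?_⟩
    rw [← hfam] at hxF ⊢
    by_contra! hcon
    obtain ⟨j, hj⟩ := hsmooth _ (hx0 x hx) (hev x ▸ hxF)
    exact hj (congrFun (horth (fun j => eval (∑ i, x i • b i) (pderiv j F)) fun k => by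
      rw [← eval_pderiv_changeCoords b F x k, hcon k]) j)
  obtain ⟨η, hη, hsec⟩ := hdata.exists_section (by omega)
  -- The linear form `v ↦ ∑ i, η i * (b.repr v) (inr i)`, in standard coordinates.
  let h : Fin (m + 1 + 1) → K := fun j => ∑ i, η i * b.repr (Pi.single j 1) (Sum.inr i)
  have hh : ∀ v, ∑ j, h j * v j = ∑ i, η i * b.repr v (Sum.inr i) := by
    intro v
    have hv : v = ∑ j, v j • (Pi.single j 1 : Fin (m + 1 + 1) → K) := by
      funext k; simp [Finset.sum_apply, Pi.single_apply]
    conv_rhs => rw [hv]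
    simp only [h, map_sum, map_smul, Finsupp.coe_finsetSum, Finset.sum_apply, Finsupp.smul_apply,
      smul_eq_mul, Finset.mul_sum, Finset.sum_mul]
    rw [Finset.sum_comm]
    exact Finset.sum_congr rfl fun i _ => Finset.sum_congr rfl fun j _ => by ring
  have hhr : ∀ i, ∑ j, h j * b (Sum.inr i) j = η i := fun i => by
    rw [hh]; simp [Finsupp.single_apply]
  have hhW : ∀ w ∈ W, ∑ j, h j * w j = 0 := fun w hw => by
    rw [hh]; exact Finset.sum_eq_zero fun i _ => by rw [hbW w hw, mul_zero]
  refine ⟨h, ?_, hhW, ?_⟩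
  · rintro h0
    exact hη (funext fun i => by rw [← hhr i, h0]; simp)
  · rintro v hv hvF - ⟨lam, hlam⟩
    have hvx : ∑ i, b.repr v i • b i = v := b.sum_repr v
    have hpd : ∀ k, eval (b.repr v) (pderiv k (changeCoords b F)) = lam * ∑ j, h j * b k j := by
      intro k
      rw [eval_pderiv_changeCoords, hvx, Finset.mul_sum]
      exact Finset.sum_congr rfl fun j _ => by rw [hlam]; ring
    refine hsec (b.repr v) ?_ ?_ ?_ ?_ ⟨lam, fun i => ?_⟩
    · intro h0
      apply hv
      rw [← hvx]
      exact Finset.sum_eq_zero fun i _ => by rw [h0]; simp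
    · rw [← hfam, hev, hvx, hvF]
    · rw [← hfam, hpd, hhW _ (hbl 0), mul_zero]
    · rw [← hfam, hpd, hhW _ (hbl 1), mul_zero]
    · rw [← hfam, hpd, hhr]
end

section
/- Let K be an algebraically closed field, let n ≥ 3, and let F ∈ K[x_0,…,x_n] be a cubic form whose zero locus X = V(F) ⊂ P^n is smooth. Let W ⊆ K^{n+1} be a 2-dimensional linear subspace on which F vanishes identically (a line L ⊂ X). If char K ≠ 2, then the set of 1-dimensional linear subspaces ⟨u⟩ ⊆ W spanned by Eckardt vectors u of X has at most 2 elements; if char K = 2, this set has at most 5 elements. -/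
/-!
Write `ℓ_u` for the differential of `F` at `u` and `Q_u(x) = ∂_u F(x)` for the polar quadric of
`u`. If `u` is an Eckardt vector, then `Q_u` vanishes on the hyperplane `ℓ_u = 0`, so
`Q_u = ℓ_u m_u` for some linear form `m_u` (`IsEck.exists_factor`). Let `u, v` span `W` and both
be Eckardt. As `F` vanishes on `W`, the polarisation `M` satisfies
`M(u, v, ·) = m_u(v) ℓ_u = m_v(u) ℓ_v`. Smoothness along the line forces `ℓ_u` and `ℓ_v` to be
independent (`IsFactor.grad_ne_smul`), so `M(u, v, ·) = 0` and `ℓ_{ru+v} = r² ℓ_u + ℓ_v`.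

If `char K ≠ 2` and `w = r u + v` with `r ≠ 0` is a third Eckardt vector, then
`0 = M(u, w, ·) = 2 r ℓ_u`, a contradiction.

For a third Eckardt vector `w = r u + v`, divisibility of `Q_w = r ℓ_u m_u + ℓ_v m_v` by
`ℓ_w = r² ℓ_u + ℓ_v` yields that `m_u - r m_v` is a multiple of `r² ℓ_u + ℓ_v`. If two such `r`
exist, then `m_u = a ℓ_u + b ℓ_v` and `m_v = a' ℓ_u + b' ℓ_v`, and every such `r` satisfies
`b' r³ - b r² - a' r + a = 0`. This leaves at most three values of `r`, hence five Eckardt points,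
unless the equation is trivial. In that case `Q_u = 0`, and in characteristic two this
contradicts smoothness: the `n + 1` partial derivatives of `F` are then linearly dependent, so by
Krull's height theorem they have a nonzero common zero, which lies on `X` by Euler's identity
(`exists_grad_ne_zero`).

To work in all characteristics, `F` is written as `F(x) = T(x, x, x)` with `T` a trilinear form,
not necessarily symmetric, and the argument is carried out for such forms `T`.
-/

open MvPolynomial

/-- `u` is an Eckardt vector of the cubic hypersurface `V(F)`. -/
def IsEckardtVec {K : Type} [Field K] {m : ℕ} (F : MvPolynomial (Fin m) K)
    (u : Fin m → K) : Prop :=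
  ∀ w : Fin m → K, eval w F = 0 →
    (∑ i, w i * eval u (pderiv i F)) = 0 →
    ∀ s t : K, eval (fun i => s * u i + t * w i) F = 0

/-! ### Common zeros of few polynomials -/

/-- The maximal ideal of the origin in affine `n`-space has height at least `n`. The chain of primes
is formed by the kernels of the substitutions killing the first `k` variables. -/
lemma le_height_vanishingIdeal_zero {K : Type} [Field K] {n : ℕ} :
    ((n : ℕ) : ℕ∞) ≤ (vanishingIdeal K ({0} : Set (Fin n → K))).height := by
  let φ : ℕ → MvPolynomial (Fin n) K →ₐ[K] MvPolynomial (Fin n) K := fun k =>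
    aeval fun i => if (i : ℕ) < k then 0 else X i
  have hP : ∀ k, (RingHom.ker (φ k)).IsPrime := fun k => RingHom.ker_isPrime _
  have hlt : ∀ k, k < n → RingHom.ker (φ k) < RingHom.ker (φ (k + 1)) := by
    intro k hk
    refine lt_of_le_of_ne ?_ ?_
    · have : φ (k + 1) = (φ (k + 1)).comp (φ k) := by
        ext i
        by_cases h : (i : ℕ) < k
        · simp [φ, h, h.le]
        · simp [φ, h]
      intro p hp
      rw [RingHom.mem_ker] at hp ⊢
      rw [this, AlgHom.comp_apply, hp, map_zero]
    · intro h
      have h1 : (X ⟨k, hk⟩ : MvPolynomial (Fin n) K) ∈ RingHom.ker (φ (k + 1)) := by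
        simp [RingHom.mem_ker, φ]
      rw [← h] at h1
      simp [RingHom.mem_ker, φ] at h1
  have hh : ∀ k, k ≤ n → (k : ℕ∞) ≤ (RingHom.ker (φ k)).height := by
    intro k
    induction k with
    | zero => simp
    | succ k ih =>
      intro hk
      have := Ideal.height_add_one_le_of_lt_of_isPrime (hlt k hk)
      push_cast
      exact (add_le_add_left (ih (by omega)) 1).trans this
  refine (hh n le_rfl).trans (Ideal.height_mono ?_)
  intro p hp
  rw [mem_vanishingIdeal_singleton_iff]
  have h2 := congrArg (aeval (0 : Fin n → K)) (RingHom.mem_ker.1 hp)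
  rw [map_zero, ← AlgHom.comp_apply] at h2
  rw [← h2]
  congr 1
  ext i
  simp [φ]

/-- Fewer than `n` polynomials in `n` variables that all vanish at the origin have another common
zero: otherwise, by the Nullstellensatz, the ideal of the origin would be minimal over the ideal
they generate, contradicting Krull's height theorem. -/
lemma exists_common_zero_s13 {K : Type} [Field K] [IsAlgClosed K] {m n : ℕ} (hmn : m < n)
    (f : Fin m → MvPolynomial (Fin n) K)
    (h0 : ∀ i, eval 0 (f i) = 0) : ∃ v : Fin n → K, v ≠ 0 ∧ ∀ i, eval v (f i) = 0 := by
  by_contra! hno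
  let I : Ideal (MvPolynomial (Fin n) K) := Ideal.span (Set.range f)
  have hz : zeroLocus K I = {0} := by
    ext v
    simp only [I, zeroLocus_span, Set.mem_ofPred_eq, Set.forall_mem_range, Set.mem_singleton_iff]
    constructor
    · intro h
      by_contra hv
      obtain ⟨i, hi⟩ := hno v hv
      exact hi (by simpa [aeval_eq_eval] using h i)
    · rintro rfl i
      simpa [aeval_eq_eval] using h0 i
  have hrad : I.radical = vanishingIdeal K ({0} : Set (Fin n → K)) := by
    rw [← hz, vanishingIdeal_zeroLocus_eq_radical]
  have hmax : (vanishingIdeal K ({0} : Set (Fin n → K))).IsMaximal := inferInstance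
  have hmin : vanishingIdeal K ({0} : Set (Fin n → K)) ∈ I.minimalPrimes := by
    rw [← Ideal.radical_minimalPrimes, hrad, Ideal.minimalPrimes_eq_subsingleton_self]
    rfl
  have h1 := Ideal.height_le_card_of_mem_minimalPrimes_span (Set.finite_range f) hmin
  have h2 : (Set.range f).ncard ≤ m := by
    rw [← Set.image_univ]
    refine (Set.ncard_image_le Set.finite_univ).trans ?_
    simp
  have h3 := Nat.cast_le.1 ((le_height_vanishingIdeal_zero (K := K) (n := n)).trans h1)
  omega

/-- On a smooth cubic in characteristic other than three, no vector `u ≠ 0` has zero polar quadric.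
Otherwise the partial derivatives satisfy a linear relation, so `n` of them cut out the common zero
set of all; they have a nonzero common zero, which lies on the cubic by Euler's identity. -/
lemma exists_grad_ne_zero {K : Type} [Field K] [IsAlgClosed K] {n : ℕ}
    {F : MvPolynomial (Fin (n + 1)) K} (hhom : F.IsHomogeneous 3)
    (hsmooth : ∀ v : Fin (n + 1) → K, v ≠ 0 → eval v F = 0 → ∃ i, eval v (pderiv i F) ≠ 0)
    (h3 : (3 : K) ≠ 0) {u : Fin (n + 1) → K} (hu : u ≠ 0) :
    ∃ x, ∑ i, u i * eval x (pderiv i F) ≠ 0 := by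
  by_contra! hno
  obtain ⟨j, hj⟩ := Function.ne_iff.1 hu
  obtain ⟨v, hv0, hv⟩ := exists_common_zero_s13 (Nat.lt_succ_self n)
    (fun k => pderiv (j.succAbove k) F) (fun k => by
      have hk : (pderiv (j.succAbove k) F).IsHomogeneous 2 := hhom.pderiv
      rw [eval_zero, constantCoeff_eq]
      exact hk.coeff_eq_zero (by simp))
  have hall : ∀ i, eval v (pderiv i F) = 0 := by
    have h := hno v
    rw [Fin.sum_univ_succAbove _ j] at h
    simp only [hv, mul_zero, Finset.sum_const_zero, add_zero] at h
    intro i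
    rcases Fin.eq_self_or_eq_succAbove j i with rfl | ⟨k, rfl⟩
    · exact (mul_eq_zero.1 h).resolve_left hj
    · exact hv k
  have hE := congrArg (eval v) hhom.sum_X_mul_pderiv
  simp only [map_sum, map_mul, hall, mul_zero, Finset.sum_const_zero,
    nsmul_eq_mul, map_natCast] at hE
  obtain ⟨i, hi⟩ := hsmooth v hv0 ((mul_eq_zero.1 hE.symm).resolve_left (by exact_mod_cast h3))
  exact hi (hall i)

/-! ### Cubic forms as trilinear forms -/

/-- A cubic form comes from a trilinear form `T`, in general not symmetric; this works in every
characteristic. The second identity expresses the gradient of `F` through `T`. -/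
lemma exists_trilin {K : Type} [Field K] {m : ℕ} (F : MvPolynomial (Fin m) K)
    (hF : F.IsHomogeneous 3) :
    ∃ T : (Fin m → K) →ₗ[K] (Fin m → K) →ₗ[K] (Fin m → K) →ₗ[K] K,
      (∀ x, eval x F = T x x x) ∧
      ∀ x w, ∑ i, w i * eval x (pderiv i F) = T w x x + T x w x + T x x w := by
  rw [F.as_sum]
  refine Finset.sum_induction _ (fun G : MvPolynomial (Fin m) K =>
    ∃ T : (Fin m → K) →ₗ[K] (Fin m → K) →ₗ[K] (Fin m → K) →ₗ[K] K,
      (∀ x, eval x G = T x x x) ∧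
      ∀ x w, ∑ i, w i * eval x (pderiv i G) = T w x x + T x w x + T x x w) ?_ ?_ ?_
  · rintro G H ⟨S, hS, hS'⟩ ⟨T, hT, hT'⟩
    refine ⟨S + T, fun x => by simp [hS, hT], fun x w => ?_⟩
    simp only [map_add, mul_add, Finset.sum_add_distrib, hS', hT', LinearMap.add_apply]
    ring
  · exact ⟨0, by simp, by simp⟩
  · intro d hd
    have hdeg : d.degree = 3 := by
      have := hF (mem_support_iff.1 hd)
      rw [Finsupp.degree_eq_weight_one]; exact this
    have hc : Multiset.card (Finsupp.toMultiset d) = 3 := by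
      rw [Finsupp.card_toMultiset]
      exact hdeg
    obtain ⟨i, j, k, hijk⟩ := Multiset.card_eq_three.1 hc
    have hd' : d = Finsupp.single i 1 + Finsupp.single j 1 + Finsupp.single k 1 := by
      have h := congrArg Multiset.toFinsupp hijk
      rw [Finsupp.toMultiset_toFinsupp] at h
      rw [h]
      change Multiset.toFinsupp (i ::ₘ j ::ₘ {k}) = _
      rw [← Multiset.singleton_add, ← Multiset.singleton_add j, map_add, map_add]
      simp only [Multiset.toFinsupp_singleton]
      abel
    have hm : monomial d (coeff d F) = C (coeff d F) * (X i * X j * X k) := by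
      rw [hd', ← mul_one (coeff _ F), ← C_mul_monomial]
      simp [X, monomial_mul]
    rw [hm]
    generalize coeff d F = c
    refine ⟨(LinearMap.proj i).smulRight ((LinearMap.proj j).smulRight (c • LinearMap.proj k)),
      fun x => by simp; ring, fun x w => ?_⟩
    have : ∀ a : Fin m, w a * eval x (pderiv a (C c * (X i * X j * X k))) =
        (if i = a then w a * (c * x j * x k) else 0) + (if j = a then w a * (c * x i * x k) else 0)
        + (if k = a then w a * (c * x i * x j) else 0) := by
      intro a
      simp only [Derivation.leibniz, pderiv_C, pderiv_X, smul_eq_mul, map_add, map_mul, eval_X,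
        eval_C, Pi.single_apply, mul_zero, add_zero]
      split_ifs <;> simp only [map_one, map_zero] <;> ring
    simp only [this, Finset.sum_add_distrib, Finset.sum_ite_eq, Finset.mem_univ, if_true]
    simp
    ring

namespace Cubic
variable {K V : Type*} [Field K] [AddCommGroup V] [Module K V]
  (T : V →ₗ[K] V →ₗ[K] V →ₗ[K] K)

/-- The differential at `x` of the cubic form `x ↦ T x x x`, as a linear form. As a function of `x`
it is quadratic. -/
def grad (x : V) : V →ₗ[K] K := (T.flip x).flip x + (T x).flip x + T x x

/-- The full polarisation of the cubic form `x ↦ T x x x`, a symmetric trilinear form. -/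
def polar (x y : V) : V →ₗ[K] K :=
  T x y + T y x + (T x).flip y + (T y).flip x + (T.flip x).flip y + (T.flip y).flip x

/-- `u` is an Eckardt vector of the cubic form `x ↦ T x x x`. -/
def IsEck (u : V) : Prop :=
  ∀ w, T w w w = 0 → grad T u w = 0 → ∀ s t : K,
    T (s • u + t • w) (s • u + t • w) (s • u + t • w) = 0

/-- The polar quadric `x ↦ grad T x u` of `u` is the union of the tangent hyperplane `grad T u = 0`
and the hyperplane `m = 0`. -/
def IsFactor (u : V) (m : V →ₗ[K] K) : Prop := ∀ x, grad T x u = grad T u x * m x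

variable {T}

lemma grad_add_smul (u v : V) (s t : K) :
    grad T (s • u + t • v) = s ^ 2 • grad T u + (s * t) • polar T u v + t ^ 2 • grad T v := by
  ext x
  simp only [grad, polar, map_add, map_smul, LinearMap.add_apply, LinearMap.smul_apply,
    LinearMap.flip_apply, smul_eq_mul]
  ring

lemma polar_swap (u v x : V) : polar T u v x = polar T u x v := by
  simp only [polar, LinearMap.add_apply, LinearMap.flip_apply]
  ring

lemma polar_comm (u v : V) : polar T u v = polar T v u := by
  ext x
  simp only [polar, LinearMap.add_apply, LinearMap.flip_apply]
  ring

lemma polar_self (u : V) : polar T u u = (2 : K) • grad T u := by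
  ext x
  simp only [grad, polar, LinearMap.add_apply, LinearMap.smul_apply,
    LinearMap.flip_apply, smul_eq_mul]
  ring

lemma polar_apply (u x y : V) :
    polar T u x y = grad T (x + y) u - grad T x u - grad T y u := by
  simp only [grad, polar, map_add, LinearMap.add_apply, LinearMap.flip_apply]
  ring

lemma cubic_add_smul (w u : V) (s : K) :
    T (w + s • u) (w + s • u) (w + s • u) =
      T w w w + s * grad T w u + s ^ 2 * grad T u w + s ^ 3 * T u u u := by
  simp only [grad, map_add, map_smul, LinearMap.add_apply, LinearMap.smul_apply,
    LinearMap.flip_apply, smul_eq_mul]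
  ring

lemma grad_self (u : V) : grad T u u = 3 * T u u u := by
  simp only [grad, LinearMap.add_apply, LinearMap.flip_apply]
  ring

lemma IsEck.smul {u : V} (hu : IsEck T u) {c : K} (hc : c ≠ 0) : IsEck T (c • u) := by
  intro w hw h s t
  have h' : grad T (c • u) = c ^ 2 • grad T u := by
    simpa using grad_add_smul (T := T) u 0 c 0
  rw [h', LinearMap.smul_apply, smul_eq_mul] at h
  rw [smul_smul]
  exact hu w hw ((mul_eq_zero.1 h).resolve_left (pow_ne_zero 2 hc)) _ _

/-- The polar quadric of an Eckardt vector `u` vanishes on its tangent hyperplane. For `w` in that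
hyperplane the cubic is affine in `s` along `w + s • u`, with slope `grad T w u`; were the slope
nonzero, the line would meet the cubic in a single point, contradicting the cone condition. -/
lemma IsEck.grad_eq_zero {u w : V} (hE : IsEck T u) (h0 : T u u u = 0) (hw : grad T u w = 0) :
    grad T w u = 0 := by
  by_contra hq
  set s : K := -T w w w / grad T w u with hs
  have hs' : T w w w + s * grad T w u = 0 := by
    rw [hs]; field_simp; ring
  -- `s` was chosen so that `w + s • u` is a zero; by the cone condition so is `w + (s + 1) • u`.
  have h1 := hE (w + s • u) (by rw [cubic_add_smul, hw, h0]; linear_combination hs')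
    (by rw [map_add, map_smul, grad_self, hw, h0]; simp) 1 1
  have h2 : (1 : K) • u + (1 : K) • (w + s • u) = w + (s + 1) • u := by module
  rw [h2, cubic_add_smul, hw, h0] at h1
  exact hq (by linear_combination h1 - hs')

/-- The polar quadric of an Eckardt vector is divisible by the equation of the tangent hyperplane. -/
lemma IsEck.exists_factor {u : V} (hE : IsEck T u) (h0 : T u u u = 0) (hu : grad T u ≠ 0) :
    ∃ m, IsFactor T u m := by
  obtain ⟨f, hf⟩ : ∃ f, grad T u f ≠ 0 := by
    by_contra! h
    exact hu (LinearMap.ext h)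
  obtain ⟨e, he⟩ : ∃ e, grad T u e = 1 := ⟨(grad T u f)⁻¹ • f, by simp [hf]⟩
  refine ⟨polar T u e - grad T e u • grad T u, fun x => ?_⟩
  have h := hE.grad_eq_zero h0 (w := (1 : K) • x + (-grad T u x) • e) (by simp [he])
  rw [grad_add_smul] at h
  simp only [LinearMap.add_apply, LinearMap.smul_apply, LinearMap.sub_apply, smul_eq_mul] at h ⊢
  rw [polar_swap u e x, polar_comm u x, polar_swap x u e]
  linear_combination h

lemma IsFactor.polar_apply {u : V} {m : V →ₗ[K] K} (h : IsFactor T u m) (x y : V) :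
    polar T u x y = grad T u x * m y + grad T u y * m x := by
  rw [Cubic.polar_apply, h, h, h, map_add, map_add]
  ring

/-- If `α β = γ δ` for linear forms and `α` is not a multiple of `γ`, then `γ` divides `β`. -/
lemma dvd_of_mul_eq {α β γ δ : V →ₗ[K] K} (h : ∀ x, α x * β x = γ x * δ x)
    (hγ : γ ≠ 0) (hαγ : ∀ c : K, α ≠ c • γ) : ∃ c : K, β = c • γ := by
  obtain ⟨f, hf⟩ : ∃ f, γ f ≠ 0 := by
    by_contra! h
    exact hγ (LinearMap.ext h)
  obtain ⟨e, he, hαe⟩ : ∃ e, γ e = 0 ∧ α e ≠ 0 := by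
    by_contra! hno
    refine hαγ (α f / γ f) (LinearMap.ext fun x => ?_)
    have := hno (x - (γ x / γ f) • f) (by simp [hf])
    simp only [map_sub, map_smul, smul_eq_mul] at this
    rw [LinearMap.smul_apply, smul_eq_mul]
    field_simp at this ⊢
    linear_combination this
  have hβe : β e = 0 := by
    have := h e
    rw [he, zero_mul] at this
    exact (mul_eq_zero.1 this).resolve_left hαe
  refine ⟨δ e / α e, LinearMap.ext fun x => ?_⟩
  have h1 := h (x + e)
  have h2 := h x
  simp only [map_add, he, hβe, add_zero] at h1
  rw [LinearMap.smul_apply, smul_eq_mul]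
  field_simp
  linear_combination h1 - h2

/-! ### Eckardt points on a line -/

section Line
variable [IsAlgClosed K] {W : Submodule K V} (hW : ∀ w ∈ W, T w w w = 0)
  (hs : ∀ w ∈ W, w ≠ 0 → grad T w ≠ 0)

include hW in
/-- The line `W` is contained in the tangent hyperplane at each of its points. -/
lemma grad_line {u v : V} (hu : u ∈ W) (hv : v ∈ W) : grad T u v = 0 := by
  classical
  have : Infinite K := IsAlgClosed.instInfinite
  obtain ⟨t, ht⟩ := Infinite.exists_notMem_finset ({0, 1} : Finset K)
  simp only [Finset.mem_insert, Finset.mem_singleton, not_or] at ht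
  have h (t : K) := hW _ (W.add_mem hu (W.smul_mem t hv))
  simp only [cubic_add_smul, hW u hu, hW v hv] at h
  have h1 := h 1
  have h2 := h t
  have h3 : t * (1 - t) * grad T u v = 0 := by linear_combination h2 - t ^ 2 * h1
  rcases mul_eq_zero.1 h3 with h3 | h3
  · rcases mul_eq_zero.1 h3 with h3 | h3
    · exact absurd h3 ht.1
    · exact absurd (sub_eq_zero.1 h3).symm ht.2
  · exact h3

variable {u v : V} (hu : u ∈ W) (hv : v ∈ W)
  (hind : ∀ s t : K, s • u + t • v = 0 → s = 0 ∧ t = 0)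

include hW hs hu hv hind in
/-- If the differentials at `u` and `v` were proportional, the differential at `s • u + v` would be
a quadratic polynomial in `s` times a fixed linear form, and a root of it would give a singular
point. -/
lemma IsFactor.grad_ne_smul {m : V →ₗ[K] K} (hm : IsFactor T u m) (c : K) :
    grad T v ≠ c • grad T u := by
  intro hc
  obtain ⟨s, hroot⟩ := IsAlgClosed.exists_root
    (Polynomial.C 1 * Polynomial.X ^ 2 + Polynomial.C (m v) * Polynomial.X + Polynomial.C c)
    (by rw [Polynomial.degree_quadratic one_ne_zero]; decide)
  simp only [Polynomial.IsRoot.def, Polynomial.eval_add, Polynomial.eval_mul, Polynomial.eval_C,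
    Polynomial.eval_pow, Polynomial.eval_X] at hroot
  refine hs (s • u + (1 : K) • v) (W.add_mem (W.smul_mem _ hu) (W.smul_mem _ hv))
    (fun h => one_ne_zero (hind _ _ h).2) (LinearMap.ext fun x => ?_)
  rw [grad_add_smul, hc]
  simp only [LinearMap.add_apply, LinearMap.smul_apply, smul_eq_mul, LinearMap.zero_apply,
    hm.polar_apply, grad_line hW hu hv]
  linear_combination grad T u x * hroot

include hW hs hu hv hind in
/-- `polar T u v` is a multiple of both of the independent forms `grad T u` and `grad T v`. -/
lemma IsFactor.polar_eq_zero {m m' : V →ₗ[K] K} (hm : IsFactor T u m) (hm' : IsFactor T v m') :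
    polar T u v = 0 := by
  have h1 : polar T u v = m v • grad T u := by
    ext x
    simp [hm.polar_apply, grad_line hW hu hv, mul_comm]
  have h2 : polar T u v = m' u • grad T v := by
    rw [polar_comm]
    ext x
    simp [hm'.polar_apply, grad_line hW hv hu, mul_comm]
  by_cases h : m' u = 0
  · rw [h2, h, zero_smul]
  · refine absurd ?_ (hm.grad_ne_smul hW hs hu hv hind ((m' u)⁻¹ * m v))
    rw [mul_smul, ← h1, h2, smul_smul, inv_mul_cancel₀ h, one_smul]

omit [IsAlgClosed K] in
include hind in
lemma indep_comb (r : K) : ∀ s t : K, s • (r • u + v) + t • u = 0 → s = 0 ∧ t = 0 := by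
  intro s t h
  have h' : (s * r + t) • u + s • v = 0 := by rw [← h]; module
  obtain ⟨h1, h2⟩ := hind _ _ h'
  subst h2
  exact ⟨rfl, by simpa using h1⟩

include hW hs hu hv hind in
/-- Outside characteristic two there is no third Eckardt point: for `w = r • u + v` Eckardt, both
`polar T u v` and `polar T u w` vanish, hence so does `r • polar T u u = (2 * r) • grad T u`. -/
lemma not_isEck_of_two_ne_zero (h2 : (2 : K) ≠ 0) (hEu : IsEck T u) (hEv : IsEck T v) {r : K}
    (hr : r ≠ 0) : ¬ IsEck T (r • u + v) := by
  intro hEw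
  have hu0 : u ≠ 0 := fun h => one_ne_zero (hind 1 0 (by simp [h])).1
  have hv0 : v ≠ 0 := fun h => one_ne_zero (hind 0 1 (by simp [h])).2
  have hw : r • u + v ∈ W := W.add_mem (W.smul_mem _ hu) hv
  have hindw := indep_comb hind r
  have hw0 : r • u + v ≠ 0 := fun h => one_ne_zero (hindw 1 0 (by simp [h])).1
  obtain ⟨m, hm⟩ := hEu.exists_factor (hW u hu) (hs u hu hu0)
  obtain ⟨m', hm'⟩ := hEv.exists_factor (hW v hv) (hs v hv hv0)
  obtain ⟨m'', hm''⟩ := hEw.exists_factor (hW _ hw) (hs _ hw hw0)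
  have h1 := hm.polar_eq_zero hW hs hu hv hind hm'
  have h3 := hm''.polar_eq_zero hW hs hw hu hindw hm
  refine hs u hu hu0 (LinearMap.ext fun x => ?_)
  have h4 : polar T (r • u + v) u x = r * polar T u u x + polar T u v x := by
    simp only [polar, map_add, map_smul, LinearMap.add_apply, LinearMap.smul_apply,
      LinearMap.flip_apply, smul_eq_mul]
    ring
  rw [h3, h1, polar_self] at h4
  simpa [hr, h2] using h4.symm

include hW hs hu hv hind in
/-- A third Eckardt point `r • u + v` forces a linear relation between the factors `m` and `m'` of
the first two: the polar quadric `r ℓ_u m + ℓ_v m'` is divisible by `r² ℓ_u + ℓ_v`, where `ℓ_u`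
and `ℓ_v` are the differentials at `u` and `v`. -/
lemma IsFactor.exists_eq_of_isEck {m m' : V →ₗ[K] K} (hm : IsFactor T u m) (hm' : IsFactor T v m')
    {r : K} (hr : r ≠ 0) (hEw : IsEck T (r • u + v)) :
    ∃ c : K, m - r • m' = c • (r ^ 2 • grad T u + grad T v) := by
  have hw : r • u + v ∈ W := W.add_mem (W.smul_mem _ hu) hv
  have hindw := indep_comb hind r
  have hw0 : r • u + v ≠ 0 := fun h => one_ne_zero (hindw 1 0 (by simp [h])).1
  obtain ⟨m'', hm''⟩ := hEw.exists_factor (hW _ hw) (hs _ hw hw0)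
  have hg : grad T (r • u + v) = r ^ 2 • grad T u + grad T v := by
    have := grad_add_smul (T := T) u v r 1
    rw [hm.polar_eq_zero hW hs hu hv hind hm'] at this
    simpa using this
  rw [← hg]
  obtain ⟨c, hc⟩ := dvd_of_mul_eq (α := grad T u) (β := r • (m - r • m'))
    (γ := grad T (r • u + v)) (δ := m'' - m') (fun x => by
      have h := hm'' x
      rw [map_add, map_smul, hm x, hm' x, hg] at h
      rw [hg]
      simp only [LinearMap.add_apply, LinearMap.smul_apply, LinearMap.sub_apply,
        smul_eq_mul] at h ⊢
      linear_combination h)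
    (hs _ hw hw0) (hm''.grad_ne_smul hW hs hw hu hindw)
  exact ⟨r⁻¹ * c, by rw [mul_smul, ← hc, smul_smul, inv_mul_cancel₀ hr, one_smul]⟩

include hW hs hu hv hind in
/-- Given two Eckardt points `u` and `v`, there are at most three more on the line, provided that no
point of the line has zero polar quadric. Once two more exist, `m` and `m'` are combinations of
the differentials at `u` and `v`, and comparing coefficients shows that every `r` is a root of one
fixed nonzero cubic polynomial. -/
lemma encard_le_three (hker : ∀ u ∈ W, u ≠ 0 → ∃ x, grad T x u ≠ 0)
    (hEu : IsEck T u) (hEv : IsEck T v) :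
    {r : K | r ≠ 0 ∧ IsEck T (r • u + v)}.encard ≤ 3 := by
  have hu0 : u ≠ 0 := fun h => one_ne_zero (hind 1 0 (by simp [h])).1
  have hv0 : v ≠ 0 := fun h => one_ne_zero (hind 0 1 (by simp [h])).2
  obtain ⟨m, hm⟩ := hEu.exists_factor (hW u hu) (hs u hu hu0)
  obtain ⟨m', hm'⟩ := hEv.exists_factor (hW v hv) (hs v hv hv0)
  have key : ∀ r : K, r ≠ 0 ∧ IsEck T (r • u + v) →
      ∃ c : K, m - r • m' = c • (r ^ 2 • grad T u + grad T v) :=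
    fun r hr => hm.exists_eq_of_isEck hW hs hu hv hind hm' hr.1 hr.2
  rcases Set.subsingleton_or_nontrivial {r : K | r ≠ 0 ∧ IsEck T (r • u + v)} with hsub | hnt
  · exact (Set.encard_le_one_iff_subsingleton.2 hsub).trans (by norm_num)
  obtain ⟨r₁, hr₁, r₂, hr₂, hne⟩ := hnt
  obtain ⟨c₁, hc₁⟩ := key r₁ hr₁
  obtain ⟨c₂, hc₂⟩ := key r₂ hr₂
  obtain ⟨a', b', hab'⟩ : ∃ a' b' : K, m' = a' • grad T u + b' • grad T v := by
    have h0 : r₂ - r₁ ≠ 0 := sub_ne_zero.2 hne.symm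
    refine ⟨(r₂ - r₁)⁻¹ * (c₁ * r₁ ^ 2 - c₂ * r₂ ^ 2), (r₂ - r₁)⁻¹ * (c₁ - c₂), ?_⟩
    have : (r₂ - r₁) • m' =
        (c₁ * r₁ ^ 2 - c₂ * r₂ ^ 2) • grad T u + (c₁ - c₂) • grad T v := by
      linear_combination (norm := module) hc₁ - hc₂
    rw [mul_smul, mul_smul, ← smul_add, ← this, smul_smul, inv_mul_cancel₀ h0, one_smul]
  obtain ⟨a, b, hab⟩ : ∃ a b : K, m = a • grad T u + b • grad T v := by
    refine ⟨c₁ * r₁ ^ 2 + r₁ * a', c₁ + r₁ * b', ?_⟩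
    rw [hab'] at hc₁
    linear_combination (norm := module) hc₁
  have hlin : ∀ s t : K, s • grad T u + t • grad T v = 0 → s = 0 ∧ t = 0 := by
    intro s t h
    have ht : t = 0 := by
      by_contra ht
      refine hm.grad_ne_smul hW hs hu hv hind (-(t⁻¹ * s)) ?_
      have : t • grad T v = -s • grad T u := by linear_combination (norm := module) h
      rw [← mul_neg, mul_smul, ← this, smul_smul, inv_mul_cancel₀ ht, one_smul]
    subst ht
    simpa [hs u hu hu0] using h
  classical
  let p : Polynomial K := Polynomial.C b' * Polynomial.X ^ 3 + Polynomial.C (-b) * Polynomial.X ^ 2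
    + Polynomial.C (-a') * Polynomial.X + Polynomial.C a
  -- If `p = 0` then `a = b = 0`, so `m = 0` and the polar quadric of `u` vanishes identically.
  have hp : p ≠ 0 := by
    intro hp
    have e0 : a = 0 := by simpa [p] using congrArg (Polynomial.coeff · 0) hp
    have e2 : b = 0 := by
      simpa [p, Polynomial.coeff_X, Polynomial.coeff_C] using congrArg (Polynomial.coeff · 2) hp
    obtain ⟨x, hx⟩ := hker u hu hu0
    exact hx (by rw [hm x, hab, e0, e2]; simp)
  have hsub : {r : K | r ≠ 0 ∧ IsEck T (r • u + v)} ⊆ (p.roots.toFinset : Set K) := by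
    intro r hr
    obtain ⟨c, hc⟩ := key r hr
    rw [hab, hab'] at hc
    obtain ⟨h1, h2⟩ := hlin (a - r * a' - c * r ^ 2) (b - r * b' - c)
      (by linear_combination (norm := module) hc)
    simp only [Finset.mem_coe, Multiset.mem_toFinset, Polynomial.mem_roots hp,
      Polynomial.IsRoot.def, p, Polynomial.eval_add, Polynomial.eval_mul, Polynomial.eval_C,
      Polynomial.eval_pow, Polynomial.eval_X]
    linear_combination h1 - r ^ 2 * h2
  refine (Set.encard_le_encard hsub).trans ?_
  rw [Set.encard_coe_eq_coe_finsetCard]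
  have hdeg : p.natDegree ≤ 3 := Polynomial.natDegree_cubic_le
  exact_mod_cast (Multiset.toFinset_card_le _).trans ((Polynomial.card_roots' p).trans hdeg)

omit [IsAlgClosed K] in
/-- Reduction to counting the Eckardt points on the line other than two given ones. -/
lemma encard_eckardt_le (hfin : Module.finrank K W = 2) (N : ℕ∞)
    (hN : ∀ u ∈ W, ∀ v ∈ W, (∀ s t : K, s • u + t • v = 0 → s = 0 ∧ t = 0) → IsEck T u →
      IsEck T v → {r : K | r ≠ 0 ∧ IsEck T (r • u + v)}.encard ≤ N) :
    {L : Submodule K V | ∃ u, u ≠ 0 ∧ u ∈ W ∧ IsEck T u ∧ L = Submodule.span K {u}}.encard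
      ≤ 2 + N := by
  set S := {L : Submodule K V | ∃ u, u ≠ 0 ∧ u ∈ W ∧ IsEck T u ∧ L = Submodule.span K {u}}
  rcases S.subsingleton_or_nontrivial with hsub | hnt
  · exact (Set.encard_le_one_iff_subsingleton.2 hsub).trans
      (le_trans (by norm_num) (self_le_add_right 2 N))
  obtain ⟨_, ⟨u, hu0, hu, hEu, rfl⟩, _, ⟨v, hv0, hv, hEv, rfl⟩, hne⟩ := hnt
  have hind : ∀ s t : K, s • u + t • v = 0 → s = 0 ∧ t = 0 := by
    intro s t h
    by_cases ht : t = 0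
    · subst ht
      simpa [hu0] using h
    · refine absurd ?_ hne
      have hv' : v = (-(t⁻¹ * s)) • u := by
        have : t • v = -s • u := by linear_combination (norm := module) h
        rw [← mul_neg, mul_smul, ← this, smul_smul, inv_mul_cancel₀ ht, one_smul]
      have hc : -(t⁻¹ * s) ≠ 0 := fun hc => hv0 (by rw [hv', hc, zero_smul])
      rw [hv', Submodule.span_singleton_smul_eq (IsUnit.mk0 _ hc)]
  have hspan : Submodule.span K {u, v} = W := by
    have : FiniteDimensional K W := Module.finite_of_finrank_pos (by omega)
    have hli : LinearIndependent K ![u, v] := LinearIndependent.pair_iff.2 hind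
    refine Submodule.eq_of_le_of_finrank_eq ?_ ?_
    · rw [Submodule.span_le]
      rintro x (rfl | rfl) <;> assumption
    · have := finrank_span_eq_card hli
      rw [hfin]
      rwa [Matrix.range_cons_cons_empty u v ![]] at this
  have hsub : S ⊆ {Submodule.span K {u}, Submodule.span K {v}} ∪
      (fun r : K => Submodule.span K {r • u + v}) '' {r : K | r ≠ 0 ∧ IsEck T (r • u + v)} := by
    rintro _ ⟨w, hw0, hw, hEw, rfl⟩
    rw [← hspan] at hw
    obtain ⟨a, b, rfl⟩ := Submodule.mem_span_pair.1 hw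
    by_cases hb : b = 0
    · subst hb
      have ha : a ≠ 0 := by rintro rfl; simp at hw0
      left; left
      rw [zero_smul, add_zero, Submodule.span_singleton_smul_eq (IsUnit.mk0 _ ha)]
    by_cases ha : a = 0
    · subst ha
      left; right
      rw [zero_smul, zero_add, Submodule.span_singleton_smul_eq (IsUnit.mk0 _ hb)]
      rfl
    · right
      have hw' : (b⁻¹ * a) • u + v = b⁻¹ • (a • u + b • v) := by
        rw [smul_add, smul_smul, smul_smul, inv_mul_cancel₀ hb, one_smul]
      refine ⟨b⁻¹ * a, ⟨mul_ne_zero (inv_ne_zero hb) ha, ?_⟩, ?_⟩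
      · rw [hw']
        exact hEw.smul (inv_ne_zero hb)
      · dsimp only
        rw [hw', Submodule.span_singleton_smul_eq (IsUnit.mk0 _ (inv_ne_zero hb))]
  refine (Set.encard_le_encard hsub).trans ((Set.encard_union_le _ _).trans (add_le_add ?_ ?_))
  · exact (Set.encard_insert_le _ _).trans (by rw [Set.encard_singleton]; norm_num)
  · exact (Set.encard_image_le _ _).trans (hN u hu v hv hind hEu hEv)
end Line
end Cubic

/-! ### The bound for a smooth cubic hypersurface -/

/-- Let `K` be algebraically closed, `n ≥ 3`, and `F` a cubic form in `n+1`
variables with smooth zero locus `X = V(F) ⊂ P^n`. Let `W` be a 2-dimensional linear subspace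
on which `F` vanishes (a line `L ⊂ X`). If `char K ≠ 2`, the set of 1-dimensional subspaces
of `W` spanned by Eckardt vectors of `X` has at most 2 elements; if `char K = 2`, it has at
most 5 elements. -/
theorem stmt_13 (K : Type) [Field K] [IsAlgClosed K]
    (n : ℕ) (hn : 3 ≤ n) (F : MvPolynomial (Fin (n + 1)) K)
    (hF : F ≠ 0) (hhom : F.IsHomogeneous 3)
    (hsmooth : ∀ v : Fin (n + 1) → K, v ≠ 0 → eval v F = 0 →
      ∃ i, eval v (pderiv i F) ≠ 0)
    (W : Submodule K (Fin (n + 1) → K)) (hW : Module.finrank K W = 2)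
    (hFW : ∀ w ∈ W, eval w F = 0) :
    (ringChar K ≠ 2 →
      {L : Submodule K (Fin (n + 1) → K) | ∃ u : Fin (n + 1) → K,
        u ≠ 0 ∧ u ∈ W ∧ eval u F = 0 ∧ IsEckardtVec F u ∧
        L = Submodule.span K {u}}.encard ≤ 2) ∧
    (ringChar K = 2 →
      {L : Submodule K (Fin (n + 1) → K) | ∃ u : Fin (n + 1) → K,
        u ≠ 0 ∧ u ∈ W ∧ eval u F = 0 ∧ IsEckardtVec F u ∧
        L = Submodule.span K {u}}.encard ≤ 5) := by
  obtain ⟨T, hT, hT'⟩ := exists_trilin F hhom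
  have hgrad : ∀ x w, ∑ i, w i * eval x (pderiv i F) = Cubic.grad T x w := hT'
  have hEck : ∀ u, IsEckardtVec F u → Cubic.IsEck T u := by
    intro u hu w hw hw' s t
    rw [← hT] at hw ⊢
    exact hu w hw (by rw [hgrad, hw']) s t
  have hWT : ∀ w ∈ W, T w w w = 0 := fun w hw => by rw [← hT, hFW w hw]
  have hs : ∀ w ∈ W, w ≠ 0 → Cubic.grad T w ≠ 0 := by
    intro w hw hw0 h
    obtain ⟨i, hi⟩ := hsmooth w hw0 (hFW w hw)
    have := hgrad w (Pi.single i 1)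
    rw [h] at this
    simp [Pi.single_apply] at this
    exact hi this
  have hsub : {L : Submodule K (Fin (n + 1) → K) | ∃ u : Fin (n + 1) → K,
        u ≠ 0 ∧ u ∈ W ∧ eval u F = 0 ∧ IsEckardtVec F u ∧
        L = Submodule.span K {u}} ⊆
      {L | ∃ u, u ≠ 0 ∧ u ∈ W ∧ Cubic.IsEck T u ∧ L = Submodule.span K {u}} := by
    rintro _ ⟨u, hu0, hu, -, hE, rfl⟩
    exact ⟨u, hu0, hu, hEck u hE, rfl⟩
  constructor
  · intro hchar
    refine (Set.encard_le_encard hsub).trans ?_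
    refine (Cubic.encard_eckardt_le hW 0 ?_).trans (by simp)
    intro u hu v hv hind hEu hEv
    rw [nonpos_iff_eq_zero, Set.encard_eq_zero, Set.eq_empty_iff_forall_notMem]
    exact fun r hr => Cubic.not_isEck_of_two_ne_zero hWT hs hu hv hind
      (Ring.two_ne_zero hchar) hEu hEv hr.1 hr.2
  · intro hchar
    have : CharP K 2 := ringChar.of_eq hchar
    have h3 : (3 : K) ≠ 0 := by
      have h2 : (2 : K) = 0 := CharTwo.two_eq_zero
      intro h
      exact one_ne_zero (α := K) (by linear_combination h - h2)
    refine (Set.encard_le_encard hsub).trans ?_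
    refine (Cubic.encard_eckardt_le hW 3 ?_).trans (by norm_num)
    intro u hu v hv hind hEu hEv
    refine Cubic.encard_le_three hWT hs hu hv hind ?_ hEu hEv
    intro w _ hw0
    obtain ⟨x, hx⟩ := exists_grad_ne_zero hhom hsmooth h3 hw0
    exact ⟨x, by rwa [← hgrad]⟩
end

section
/- Let K be an algebraically closed field of characteristic greater than 3, let n ≥ 4, and let F ∈ K[x_0,…,x_n] be a cubic form whose zero locus X = V(F) ⊂ P^n is smooth. Then X contains only finitely many Eckardt points; that is, the set of 1-dimensional linear subspaces ⟨u⟩ ⊆ K^{n+1} spanned by nonzero Eckardt vectors u of X is finite. -/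
/-!
Finiteness is reduced to combinatorics of reflections.

Let `T` be the symmetric trilinear form with `6 F(x) = T(x,x,x)`.  If `u` is an Eckardt vector and
`T(u,u,w) = 0`, then sliding `w` along `u` until it lies on `X` shows `T(u,w,w) = 0`
(`eckardt_vanish`).  So the quadratic form `T(u,·,·)` vanishes on the hyperplane `T(u,u,·) = 0`,
and hence `2 T(u,x,y) = T(u,u,x) M(y) + M(x) T(u,u,y)` for a linear form `M` with `M(u) = 2`
(`IsAxis`, `exists_isAxis`).  The reflection `x ↦ x - M(x) u` preserves `T`, so it permutes
Eckardt vectors (`IsAxis.reflect`).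

For two non-proportional Eckardt vectors `u`, `v` with forms `M`, `N`, smoothness gives: either
`M(v) = N(u) = 0`, or `M(v) N(u) = 1` (`IsAxis.dichotomy`), i.e. the reflections commute or generate
`S₃`.  Reflecting one member of a triple of pairwise non-commuting vectors and applying the
dichotomy again shows that the cyclic product `M₁(u₂) M₂(u₃) M₃(u₁)` is a sixth root of unity
(`triple`), and so is every cross-ratio `M_u(v) M_w(v') / (M_u(v') M_w(v))` formed from
nonzero entries (`cross`).

Choose finitely many Eckardt vectors `u_i` spanning the span of all of them.  By the cross-ratio
statement, away from the classes of the `u_i`, each quotient `M_i(v) / M_j(v)` takes finitely many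
values.  These quotients determine the class of `v`: if `v` and `v'` have the same quotients, then
their forms `N`, `N'` are proportional on the span, so `N(v') N'(v) = N(v) N'(v') = 4`, and by the
dichotomy `v` and `v'` are proportional.
-/

open MvPolynomial

/-! ### Reflections preserving a symmetric trilinear form -/

section Axes

variable {K V : Type} [Field K] [AddCommGroup V] [Module K V]

/-- `u` is an Eckardt vector of the cubic form `T(x,x,x)`, in algebraic form: the quadratic form
`T(u,·,·)` is the product of `T(u,u,·)` and the linear form `M`, normalized by `M u = 2`.  Then
`x ↦ x - M x • u` is a reflection preserving `T`. -/
structure IsAxis (T : V →ₗ[K] V →ₗ[K] V →ₗ[K] K) (u : V) (M : V →ₗ[K] K) : Prop where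
  two_mul : ∀ x y, 2 * T u x y = T u u x * M y + M x * T u u y
  apply_self : M u = 2

variable {T : V →ₗ[K] V →ₗ[K] V →ₗ[K] K}

theorem IsAxis.apply_self_self (h2 : (2 : K) ≠ 0) {u : V} {M : V →ₗ[K] K} (hu : IsAxis T u M) :
    T u u u = 0 := by
  have h := hu.two_mul u u
  rw [hu.apply_self] at h
  have : 2 * T u u u = 0 := by linear_combination -h
  simpa [h2] using this

theorem IsAxis.ne_zero (h2 : (2 : K) ≠ 0) {u : V} {M : V →ₗ[K] K} (hu : IsAxis T u M) :
    u ≠ 0 := by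
  rintro rfl
  exact h2 (by simpa using hu.apply_self.symm)

/-- The reflection in an axis preserves `T`. -/
theorem IsAxis.invariant (h2 : (2 : K) ≠ 0) (h12 : ∀ x y z, T x y z = T y x z)
    (h23 : ∀ x y z, T x y z = T x z y) {u : V} {M : V →ₗ[K] K} (hu : IsAxis T u M) (x y z : V) :
    T (x - M x • u) (y - M y • u) (z - M z • u) = T x y z := by
  have e0 := hu.apply_self_self h2
  have e1 := hu.two_mul y z
  have e2 := hu.two_mul x z
  have e3 := hu.two_mul x y
  have a1 : T x u z = T u x z := h12 _ _ _
  have a2 : T x y u = T u x y := by rw [h23, h12]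
  have a3 : T x u u = T u u x := by rw [h12, h23]
  have a4 : T u y u = T u u y := h23 _ _ _
  apply mul_left_cancel₀ h2
  simp only [map_sub, map_smul, LinearMap.sub_apply, LinearMap.smul_apply, smul_eq_mul,
    a1, a2, a3, a4, e0]
  linear_combination -M x * e1 - M y * e2 - M z * e3

/-- Reflecting an axis in another axis gives an axis. -/
theorem IsAxis.reflect (h2 : (2 : K) ≠ 0) (h12 : ∀ x y z, T x y z = T y x z)
    (h23 : ∀ x y z, T x y z = T x z y) {u v : V} {M N : V →ₗ[K] K}
    (hu : IsAxis T u M) (hv : IsAxis T v N) : IsAxis T (u - N u • v) (M - M v • N) := by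
  have inv : ∀ x, (x - N x • v) - N (x - N x • v) • v = x := by
    intro x
    have : N (x - N x • v) = - N x := by
      simp only [map_sub, map_smul, smul_eq_mul, hv.apply_self]; ring
    rw [this]; simp
  have key1 : ∀ x y, T (u - N u • v) x y = T u (x - N x • v) (y - N y • v) := by
    intro x y
    conv_lhs => rw [← inv x, ← inv y]
    exact hv.invariant h2 h12 h23 _ _ _
  have key2 : ∀ x, T (u - N u • v) (u - N u • v) x = T u u (x - N x • v) := by
    intro x
    conv_lhs => rw [← inv x]
    exact hv.invariant h2 h12 h23 _ _ _
  constructor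
  · intro x y
    rw [key1, key2, key2, hu.two_mul]
    simp only [map_sub, map_smul, LinearMap.sub_apply, LinearMap.smul_apply, smul_eq_mul]
    ring
  · simp only [map_sub, map_smul, LinearMap.sub_apply, LinearMap.smul_apply, smul_eq_mul,
      hu.apply_self, hv.apply_self]
    ring

/-- The reflections of two non-proportional axes commute or generate an `S₃`.  If `T(u,u,v) = 0` but
`M v ≠ 0`, the forms `T(u,u,·)` and `T(v,v,·)` are proportional, and some point of the line through
`u` and `v` is singular. -/
theorem IsAxis.dichotomy [IsAlgClosed K] (h2 : (2 : K) ≠ 0) (h12 : ∀ x y z, T x y z = T y x z)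
    (h23 : ∀ x y z, T x y z = T x z y) (hsm : ∀ v, v ≠ 0 → ∃ x, T v v x ≠ 0)
    {u v : V} {M N : V →ₗ[K] K}
    (hu : IsAxis T u M) (hv : IsAxis T v N) (hne : ∀ c : K, v ≠ c • u) :
    (M v = 0 ∧ N u = 0) ∨ M v * N u = 1 := by
  have e1 : T v v u = T u u v * M v := by
    have h := hu.two_mul v v
    have : T v v u = T u v v := by rw [h23, h12]
    rw [this]
    apply mul_left_cancel₀ h2
    linear_combination h
  have e2 : T u u v = T v v u * N u := by
    have h := hv.two_mul u u
    have : T u u v = T v u u := by rw [h23, h12]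
    rw [this]
    apply mul_left_cancel₀ h2
    linear_combination h
  by_cases hl : T u u v = 0
  · left
    have hl' : T v v u = 0 := by rw [e1, hl, zero_mul]
    have f1 : ∀ x, 2 * T u v x = M v * T u u x := by
      intro x; rw [hu.two_mul, hl]; ring
    have f2 : ∀ x, 2 * T u v x = N u * T v v x := by
      intro x; rw [h12 u v x, hv.two_mul, hl']; ring
    obtain ⟨a, ha⟩ := hsm u (hu.ne_zero h2)
    obtain ⟨b, hb⟩ := hsm v (hv.ne_zero h2)
    have g1 : N u = 0 → M v = 0 := by
      intro h
      have := (f1 a).symm.trans (f2 a)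
      rw [h, zero_mul] at this
      exact (mul_eq_zero.1 this).resolve_right ha
    by_cases hN : N u = 0
    · exact ⟨g1 hN, hN⟩
    exfalso
    have hv' : ∀ x, T v v x = (M v / N u) * T u u x := by
      intro x
      have := (f1 x).symm.trans (f2 x)
      field_simp
      linear_combination -this
    -- `s` is a root of the quadratic by which `T(su+v,su+v,·)` is a multiple of `T(u,u,·)`.
    obtain ⟨s, hs⟩ : ∃ s : K, s * s + M v * s + M v / N u = 0 := by
      let p : Polynomial K := Polynomial.X ^ 2 + Polynomial.C (M v) * Polynomial.X
        + Polynomial.C (M v / N u)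
      have hp : p.natDegree = 2 := by
        simp only [p]; compute_degree!
      obtain ⟨s, hs⟩ := IsAlgClosed.exists_root p (by
        intro h
        have := Polynomial.natDegree_eq_zero_iff_degree_le_zero.2 h.le
        omega)
      refine ⟨s, ?_⟩
      have : Polynomial.eval s p = 0 := hs
      simp [p] at this
      linear_combination this
    obtain ⟨x, hx⟩ := hsm (s • u + v) (by
      intro h
      refine hne (-s) ?_
      rw [neg_smul]
      exact (neg_eq_of_add_eq_zero_right h).symm)
    apply hx
    simp only [map_add, map_smul, LinearMap.add_apply, LinearMap.smul_apply, smul_eq_mul]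
    rw [h12 v u x, hv' x]
    linear_combination T u u x * hs + s * f1 x
  · right
    apply mul_left_cancel₀ hl
    linear_combination -e2 + (- N u) * e1

/-- For three pairwise non-commuting axes, the cyclic product is a sixth root of unity.  The product
for the pair `(u - N u • v, w)` is `2 - X - X⁻¹`, where `X` is the cyclic product, and it must be
`0`, `1` or (in the proportional case) `4`. -/
theorem triple [IsAlgClosed K] (h2 : (2 : K) ≠ 0) (h12 : ∀ x y z, T x y z = T y x z)
    (h23 : ∀ x y z, T x y z = T x z y) (hsm : ∀ v, v ≠ 0 → ∃ x, T v v x ≠ 0)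
    {u v w : V} {M N P : V →ₗ[K] K}
    (hu : IsAxis T u M) (hv : IsAxis T v N) (hw : IsAxis T w P)
    (huv : M v * N u = 1) (hvw : N w * P v = 1) (hwu : P u * M w = 1) :
    (M v * N w * P u) ^ 6 = 1 := by
  have hr := hu.reflect h2 h12 h23 hv
  set X := M v * N w * P u with hX
  set Y := M w * P v * N u with hY
  have hXY : X * Y = 1 := by
    have : X * Y = (M v * N u) * (N w * P v) * (P u * M w) := by rw [hX, hY]; ring
    rw [this, huv, hvw, hwu]; ring
  have hprod : P (u - N u • v) * (M - M v • N) w = 2 - X - Y := by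
    simp only [map_sub, map_smul, LinearMap.sub_apply, LinearMap.smul_apply, smul_eq_mul]
    rw [hX, hY]
    linear_combination hwu + N w * P v * huv + hvw
  by_cases hc : ∃ c : K, (u - N u • v) = c • w
  · obtain ⟨c, hc⟩ := hc
    have h1 : P (u - N u • v) = c * 2 := by rw [hc, map_smul, hw.apply_self, smul_eq_mul]
    have h3 := hr.apply_self
    have h4 : (M - M v • N) (u - N u • v) = c * (M - M v • N) w := by
      conv_lhs => rw [hc, map_smul, smul_eq_mul]
    rw [h4] at h3
    rw [h1] at hprod
    have h5 : X + Y = -2 := by linear_combination hprod - 2 * h3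
    have h6 : (X + 1) ^ 2 = 0 := by linear_combination X * h5 - hXY
    have h7 : X = -1 := by
      have := pow_eq_zero_iff (two_ne_zero) |>.1 h6
      linear_combination this
    rw [h7]; norm_num
  · rcases hw.dichotomy h2 h12 h23 hsm hr (fun c h => hc ⟨c, h⟩) with ⟨h, -⟩ | h
    · rw [h, zero_mul] at hprod
      have h6 : (X - 1) ^ 2 = 0 := by linear_combination X * hprod - hXY
      have h7 : X = 1 := by
        have := pow_eq_zero_iff (two_ne_zero) |>.1 h6
        linear_combination this
      rw [h7]; norm_num
    · rw [h] at hprod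
      have h6 : X ^ 2 - X + 1 = 0 := by linear_combination X * hprod - hXY
      linear_combination (X ^ 3 - 1) * (X + 1) * h6

/-- The cross-ratio bound when `v` and `v'` do not commute: divide two cyclic products. -/
theorem cross_aux [IsAlgClosed K] (h2 : (2 : K) ≠ 0) (h12 : ∀ x y z, T x y z = T y x z)
    (h23 : ∀ x y z, T x y z = T x z y) (hsm : ∀ v, v ≠ 0 → ∃ x, T v v x ≠ 0)
    {u w v v' : V} {M P N N' : V →ₗ[K] K}
    (hu : IsAxis T u M) (hw : IsAxis T w P) (hv : IsAxis T v N) (hv' : IsAxis T v' N')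
    (huv : M v * N u = 1) (huv' : M v' * N' u = 1) (hwv : P v * N w = 1)
    (hwv' : P v' * N' w = 1) (hvv : N v' * N' v = 1) :
    (M v * P v') ^ 6 = (M v' * P v) ^ 6 := by
  have t1 := triple h2 h12 h23 hsm hu hv hv' huv hvv (by rw [mul_comm]; exact huv')
  have t2 := triple h2 h12 h23 hsm hw hv hv' hwv hvv (by rw [mul_comm]; exact hwv')
  calc (M v * P v') ^ 6 = (M v * P v') ^ 6 * (P v * N v' * N' w) ^ 6 * (M v' * N' u) ^ 6 := by
        rw [t2, huv']; ring
    _ = (M v * N v' * N' u) ^ 6 * (M v' * P v) ^ 6 * (P v' * N' w) ^ 6 := by ring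
    _ = _ := by rw [t1, hwv']; ring

/-- Cross-ratios of nonzero entries are sixth roots of unity.  If both pairs `u, w` and `v, v'`
commute, `v` is replaced by its reflection in `u`, which does not commute with `v'`. -/
theorem cross [IsAlgClosed K] (h2 : (2 : K) ≠ 0) (h12 : ∀ x y z, T x y z = T y x z)
    (h23 : ∀ x y z, T x y z = T x z y) (hsm : ∀ v, v ≠ 0 → ∃ x, T v v x ≠ 0)
    {u w v v' : V} {M P N N' : V →ₗ[K] K}
    (hu : IsAxis T u M) (hw : IsAxis T w P) (hv : IsAxis T v N) (hv' : IsAxis T v' N')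
    (huv : M v * N u = 1) (huv' : M v' * N' u = 1) (hwv : P v * N w = 1)
    (hwv' : P v' * N' w = 1) :
    (M v * P v') ^ 6 = (M v' * P v) ^ 6 := by
  by_cases hc : ∃ c : K, v' = c • v
  · obtain ⟨c, rfl⟩ := hc
    simp only [map_smul, smul_eq_mul]; ring
  have dual : (N u * N' w) ^ 6 = (N w * N' u) ^ 6 → (M v * P v') ^ 6 = (M v' * P v) ^ 6 := by
    intro h
    calc (M v * P v') ^ 6 = (M v * P v') ^ 6 * (P v * N w) ^ 6 * (M v' * N' u) ^ 6 := by
          rw [hwv, huv']; ring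
      _ = (M v * P v') ^ 6 * (M v' * P v) ^ 6 * (N w * N' u) ^ 6 := by ring
      _ = (M v' * P v) ^ 6 * (M v * N u) ^ 6 * (P v' * N' w) ^ 6 := by rw [← h]; ring
      _ = _ := by rw [huv, hwv']; ring
  rcases hv.dichotomy h2 h12 h23 hsm hv' (fun c h => hc ⟨c, h⟩) with ⟨z1, z2⟩ | hvv
  swap
  · exact cross_aux h2 h12 h23 hsm hu hw hv hv' huv huv' hwv hwv' hvv
  by_cases hd : ∃ c : K, w = c • u
  · obtain ⟨c, rfl⟩ := hd
    apply dual
    simp only [map_smul, smul_eq_mul]; ring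
  rcases hu.dichotomy h2 h12 h23 hsm hw (fun c h => hd ⟨c, h⟩) with ⟨y1, y2⟩ | huw
  swap
  · apply dual
    rw [mul_comm] at huv huv' hwv hwv'
    rw [cross_aux h2 h12 h23 hsm hv hv' hu hw huv hwv huv' hwv' huw]
  have hr := hv.reflect h2 h12 h23 hu
  have k1 : M (v - M v • u) = - M v := by
    simp only [map_sub, map_smul, smul_eq_mul, hu.apply_self]; ring
  have k2 : P (v - M v • u) = P v := by simp [y2]
  have k3 : (N - N u • M) u = - N u := by
    simp only [LinearMap.sub_apply, LinearMap.smul_apply, smul_eq_mul, hu.apply_self]; ring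
  have k4 : (N - N u • M) w = N w := by simp [y1]
  have k5 : (N - N u • M) v' = - (N u * M v') := by simp [z1]
  have k6 : N' (v - M v • u) = - (M v * N' u) := by simp [z2]
  have := cross_aux h2 h12 h23 hsm hu hw hr hv' (by rw [k1, k3, ← huv]; ring) huv'
    (by rw [k2, k4, hwv]) hwv'
    (by rw [k5, k6]; linear_combination N' u * M v' * huv + huv')
  rw [k1, k2] at this
  rw [← this]; ring

/-! ### Finiteness -/

/-- The classes of axes other than those of a finite spanning set embed into a finite set of tables
of quotients `M_i(v) / M_j(v)`. -/
theorem finite_axes [IsAlgClosed K] [FiniteDimensional K V]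
    (h2 : (2 : K) ≠ 0) (h3 : (3 : K) ≠ 0) (h12 : ∀ x y z, T x y z = T y x z)
    (h23 : ∀ x y z, T x y z = T x z y) (hsm : ∀ v, v ≠ 0 → ∃ x, T v v x ≠ 0) :
    {L : Submodule K V | ∃ u M, IsAxis T u M ∧ L = Submodule.span K {u}}.Finite := by
  classical
  obtain ⟨b, hbU, hspan, hli⟩ := exists_linearIndependent K {u : V | ∃ M, IsAxis T u M}
  have hbfin : b.Finite := hli.setFinite
  have : Finite b := hbfin
  choose Mb hMb using fun i : b => hbU i.2
  set W : Set (Submodule K V) := {L | ∃ u M, IsAxis T u M ∧ L = Submodule.span K {u}} with hW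
  set B : Set (Submodule K V) := (fun u => Submodule.span K {u}) '' b with hB
  have hBfin : B.Finite := hbfin.image _
  suffices h : (W \ B).Finite from
    (h.union hBfin).subset (fun L hL => by by_cases h : L ∈ B <;> simp [h, hL])
  choose u N hN hL using fun L : ↥(W \ B) => L.2.1
  have hne : ∀ (L : ↥(W \ B)) (i : b) (c : K), u L ≠ c • (i : V) := by
    intro L i c h
    apply L.2.2
    refine ⟨i, i.2, ?_⟩
    have hc : c ≠ 0 := by
      rintro rfl
      exact (hN L).ne_zero h2 (by simpa using h)
    rw [hL L, h]
    exact (Submodule.span_singleton_smul_eq (IsUnit.mk0 c hc) (i : V)).symm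
  have hdich : ∀ (L : ↥(W \ B)) (i : b),
      (Mb i (u L) = 0 ∧ N L i = 0) ∨ Mb i (u L) * N L i = 1 := fun L i =>
    (hMb i).dichotomy h2 h12 h23 hsm (hN L) (hne L i)
  have hdich' : ∀ (L : ↥(W \ B)) (i : b), Mb i (u L) ≠ 0 → Mb i (u L) * N L i = 1 :=
    fun L i h => (hdich L i).resolve_left (fun h' => h h'.1)
  let f : ↥(W \ B) → (b × b → K) := fun L p => Mb p.1 (u L) / Mb p.2 (u L)
  have hrange : ∀ p, (Set.range (fun L => f L p)).Finite := by
    intro p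
    by_cases h0 : ∃ L0, f L0 p ≠ 0
    · obtain ⟨L0, h0⟩ := h0
      refine ((Set.finite_singleton (0 : K)).union
        (Polynomial.nthRoots 6 (f L0 p ^ 6)).toFinset.finite_toSet).subset ?_
      rintro _ ⟨L, rfl⟩
      by_cases hz : f L p = 0
      · left; exact hz
      right
      simp only [Finset.mem_coe, Multiset.mem_toFinset]
      rw [Polynomial.mem_nthRoots (by norm_num)]
      obtain ⟨a1, a2⟩ := div_ne_zero_iff.1 hz
      obtain ⟨a3, a4⟩ := div_ne_zero_iff.1 h0
      have hx := cross h2 h12 h23 hsm (hMb p.1) (hMb p.2) (hN L) (hN L0)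
        (hdich' _ _ a1) (hdich' _ _ a3) (hdich' _ _ a2) (hdich' _ _ a4)
      simp only [f, div_pow]
      rw [div_eq_div_iff (pow_ne_zero _ a2) (pow_ne_zero _ a4), ← mul_pow, hx, mul_pow]
    · push Not at h0
      refine (Set.finite_singleton (0 : K)).subset ?_
      rintro _ ⟨L, rfl⟩
      exact h0 L
  have hfin : (Set.range f).Finite :=
    (Set.Finite.pi hrange).subset (by
      rintro _ ⟨L, rfl⟩ p -
      exact ⟨L, rfl⟩)
  have hinj : Function.Injective f := by
    intro L L' hff
    have hmem : ∀ L, u L ∈ Submodule.span K b := by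
      intro L
      rw [hspan]
      exact Submodule.subset_span ⟨N L, hN L⟩
    obtain ⟨i, hi⟩ : ∃ i : b, N L i ≠ 0 := by
      by_contra! h
      have : Submodule.span K b ≤ LinearMap.ker (N L) :=
        Submodule.span_le.2 (fun x hx => h ⟨x, hx⟩)
      have := this (hmem L)
      rw [LinearMap.mem_ker, (hN L).apply_self] at this
      exact h2 this
    have hMi : Mb i (u L) ≠ 0 := fun h => by
      rcases hdich L i with h' | h'
      · exact hi h'.2
      · rw [h, zero_mul] at h'; exact zero_ne_one h'
    have hMi' : Mb i (u L') ≠ 0 := fun h => by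
      have := congrFun hff (i, i)
      simp [f, h, hMi] at this
    set l := Mb i (u L) / Mb i (u L') with hl
    have hl0 : l ≠ 0 := div_ne_zero hMi hMi'
    have hprop : ∀ j, Mb j (u L) = l * Mb j (u L') := by
      intro j
      have := congrFun hff (j, i)
      simp only [f] at this
      rw [div_eq_div_iff hMi hMi'] at this
      rw [hl]; field_simp
      linear_combination this
    have hNN : ∀ x ∈ Submodule.span K b, N L' x = l * N L x := by
      have : Submodule.span K b ≤ LinearMap.ker (N L' - l • N L) := by
        refine Submodule.span_le.2 (fun x hx => ?_)
        have hp := hprop ⟨x, hx⟩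
        rw [SetLike.mem_coe, LinearMap.mem_ker]
        simp only [LinearMap.sub_apply, LinearMap.smul_apply, smul_eq_mul]
        rcases hdich L ⟨x, hx⟩ with ⟨a, a'⟩ | a <;> rcases hdich L' ⟨x, hx⟩ with ⟨c, c'⟩ | c
        · simp only at a' c'
          rw [a', c']; ring
        · rw [a] at hp
          rw [(mul_eq_zero.1 hp.symm).resolve_left hl0, zero_mul] at c
          exact absurd c zero_ne_one
        · rw [hp, c, mul_zero, zero_mul] at a
          exact absurd a zero_ne_one
        · rw [hp] at a
          simp only at a c
          linear_combination (- N L' x) * a + l * N L x * c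
      intro x hx
      have := this hx
      rw [LinearMap.mem_ker] at this
      simp only [LinearMap.sub_apply, LinearMap.smul_apply, smul_eq_mul] at this
      linear_combination this
    have q1 := hNN _ (hmem L)
    have q2 := hNN _ (hmem L')
    rw [(hN L).apply_self] at q1
    rw [(hN L').apply_self] at q2
    have q3 : N L (u L') * N L' (u L) = 4 := by
      rw [q1]; linear_combination (-2) * q2
    by_cases hc : ∃ c : K, u L' = c • u L
    · obtain ⟨c, hc⟩ := hc
      have hc0 : c ≠ 0 := by
        rintro rfl
        exact (hN L').ne_zero h2 (by simpa using hc)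
      apply Subtype.ext
      rw [hL L, hL L', hc]
      exact (Submodule.span_singleton_smul_eq (IsUnit.mk0 c hc0) (u L)).symm
    · exfalso
      rcases (hN L).dichotomy h2 h12 h23 hsm (hN L') (fun c h => hc ⟨c, h⟩) with ⟨h, -⟩ | h
      · rw [h, zero_mul] at q3
        exact mul_ne_zero h2 h2 (by linear_combination -q3)
      · rw [h] at q3
        exact h3 (by linear_combination -q3)
  have : Finite (Set.range f) := hfin
  exact Finite.of_injective _ (Set.rangeFactorization_injective.2 hinj)

/-! ### Polarization of a cubic form and its Eckardt vectors -/

/-- A quadratic form `T(u,·,·)` vanishing on the hyperplane `T(u,u,·) = 0` is divisible by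
`T(u,u,·)`. -/
theorem exists_isAxis (h2 : (2 : K) ≠ 0)
    (h23 : ∀ x y z, T x y z = T x z y) {u : V} (hl : ∃ x, T u u x ≠ 0) (hu : T u u u = 0)
    (hq : ∀ w, T u u w = 0 → T u w w = 0) : ∃ M, IsAxis T u M := by
  obtain ⟨x, hx⟩ := hl
  obtain ⟨e, he⟩ : ∃ e, T u u e = 1 := ⟨(T u u x)⁻¹ • x, by simp [hx]⟩
  have hpol : ∀ w w', T u u w = 0 → T u u w' = 0 → T u w w' = 0 := by
    intro w w' h h'
    have q := hq (w + w') (by simp [h, h'])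
    simp only [map_add, LinearMap.add_apply, hq w h, hq w' h', h23 u w' w] at q
    apply mul_left_cancel₀ h2
    linear_combination q
  refine ⟨(2 : K) • (T u).flip e - T u e e • T u u, ⟨fun x y => ?_, ?_⟩⟩
  · have h := hpol (x - T u u x • e) (y - T u u y • e) (by simp [he]) (by simp [he])
    simp only [map_sub, map_smul, LinearMap.sub_apply, LinearMap.smul_apply, smul_eq_mul,
      LinearMap.flip_apply] at h ⊢
    rw [h23 u e y] at h
    linear_combination 2 * h
  · simp [he, hu]

end Axes

section Polar

variable {K : Type} [Field K] {m : ℕ}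

theorem pderiv_comm' (F : MvPolynomial (Fin m) K) (i j : Fin m) :
    pderiv i (pderiv j F) = pderiv j (pderiv i F) := by
  have h : ⁅pderiv (R := K) i, pderiv (R := K) j⁆ = 0 := by
    apply MvPolynomial.derivation_ext
    intro k
    rw [Derivation.commutator_apply]
    simp [pderiv_X, Pi.single_apply, apply_ite]
  have := congrArg (fun D => D F) h
  simp only [Derivation.commutator_apply, Derivation.zero_apply] at this
  exact sub_eq_zero.1 this

/-- The trilinear form whose coefficients are the constant coefficients of the third partial
derivatives of `F`; for a cubic form it satisfies `T(x,x,x) = 6 F(x)`. -/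
noncomputable def polar (F : MvPolynomial (Fin m) K) :
    (Fin m → K) →ₗ[K] (Fin m → K) →ₗ[K] (Fin m → K) →ₗ[K] K :=
  ∑ i, ∑ j, ∑ k, coeff 0 (pderiv i (pderiv j (pderiv k F))) •
    (LinearMap.proj i : (Fin m → K) →ₗ[K] K).smulRight
      ((LinearMap.proj j : (Fin m → K) →ₗ[K] K).smulRight
        (LinearMap.proj k : (Fin m → K) →ₗ[K] K))

theorem polar_apply (F : MvPolynomial (Fin m) K) (x y z : Fin m → K) :
    polar F x y z =
      ∑ i, ∑ j, ∑ k, coeff 0 (pderiv i (pderiv j (pderiv k F))) * (x i * (y j * z k)) := by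
  simp [polar, LinearMap.sum_apply]

theorem polar_symm12 (F : MvPolynomial (Fin m) K) (x y z : Fin m → K) :
    polar F x y z = polar F y x z := by
  rw [polar_apply, polar_apply, Finset.sum_comm]
  refine Finset.sum_congr rfl fun i _ => Finset.sum_congr rfl fun j _ =>
    Finset.sum_congr rfl fun k _ => ?_
  rw [pderiv_comm' (pderiv k F) j i]; ring

theorem polar_symm23 (F : MvPolynomial (Fin m) K) (x y z : Fin m → K) :
    polar F x y z = polar F x z y := by
  rw [polar_apply, polar_apply]
  refine Finset.sum_congr rfl fun i _ => ?_
  rw [Finset.sum_comm]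
  refine Finset.sum_congr rfl fun j _ => Finset.sum_congr rfl fun k _ => ?_
  rw [pderiv_comm' F k j]; ring

theorem euler_eval {F : MvPolynomial (Fin m) K} {d : ℕ} (h : F.IsHomogeneous d)
    (x : Fin m → K) : ∑ i, x i * eval x (pderiv i F) = d * eval x F := by
  have := congrArg (eval x) h.sum_X_mul_pderiv
  simpa using this

theorem polar_grad {F : MvPolynomial (Fin m) K} (h : F.IsHomogeneous 3) (x w : Fin m → K) :
    polar F x x w = 2 * ∑ i, w i * eval x (pderiv i F) := by
  have e2 : ∀ k, 2 * eval x (pderiv k F) = ∑ j, x j * eval x (pderiv j (pderiv k F)) := by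
    intro k
    rw [euler_eval (d := 2) h.pderiv]; norm_num
  have e1 : ∀ j k, eval x (pderiv j (pderiv k F)) =
      ∑ i, x i * coeff 0 (pderiv i (pderiv j (pderiv k F))) := by
    intro j k
    have hh : (pderiv j (pderiv k F)).IsHomogeneous 1 := (h.pderiv (i := k)).pderiv
    have := euler_eval hh x
    rw [Nat.cast_one, one_mul] at this
    rw [← this]
    refine Finset.sum_congr rfl fun i _ => ?_
    have h0 : (pderiv i (pderiv j (pderiv k F))).IsHomogeneous 0 := hh.pderiv
    congr 1
    have hC := (totalDegree_eq_zero_iff_eq_C (p := pderiv i (pderiv j (pderiv k F)))).1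
      (Nat.le_zero.1 h0.totalDegree_le)
    conv_lhs => rw [hC]
    simp
  rw [polar_apply, Finset.mul_sum]
  have : ∀ k, 2 * (w k * eval x (pderiv k F)) =
      ∑ j, ∑ i, coeff 0 (pderiv i (pderiv j (pderiv k F))) * (x i * (x j * w k)) := by
    intro k
    rw [mul_left_comm, e2, Finset.mul_sum]
    refine Finset.sum_congr rfl fun j _ => ?_
    rw [e1, Finset.mul_sum, Finset.mul_sum]
    refine Finset.sum_congr rfl fun i _ => ?_
    ring
  simp only [this]
  rw [Finset.sum_comm]
  conv_lhs => enter [2, j]; rw [Finset.sum_comm]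
  rw [Finset.sum_comm]

theorem polar_self {F : MvPolynomial (Fin m) K} (h : F.IsHomogeneous 3) (x : Fin m → K) :
    polar F x x x = 6 * eval x F := by
  rw [polar_grad h, euler_eval h]; push_cast; ring

/-- If `w` lies in the tangent hyperplane at the Eckardt vector `u` and `T(u,w,w) ≠ 0`, some
`w + s u` lies on the cubic, where the Eckardt condition forces `T(u,w + s u,w + s u) = T(u,w,w)`
to vanish. -/
theorem eckardt_vanish (h2 : (2 : K) ≠ 0) (h3 : (3 : K) ≠ 0) {F : MvPolynomial (Fin m) K}
    (h : F.IsHomogeneous 3) {u : Fin m → K} (hu : eval u F = 0) (hE : IsEckardtVec F u)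
    (w : Fin m → K) (hw : polar F u u w = 0) : polar F u w w = 0 := by
  have hu3 : polar F u u u = 0 := by rw [polar_self h, hu, mul_zero]
  have key : ∀ w, polar F u u w = 0 → eval w F = 0 → polar F u w w = 0 := by
    intro w hw hw0
    have hg : ∑ i, w i * eval u (pderiv i F) = 0 := by
      rw [polar_grad h] at hw
      exact (mul_eq_zero.1 hw).resolve_left h2
    have := hE w hw0 hg 1 1
    have hp := polar_self h (u + w)
    have e : (fun i => 1 * u i + 1 * w i) = u + w := by ext i; simp
    rw [e] at this
    rw [this] at hp
    simp only [map_add, LinearMap.add_apply, polar_self h w, hw0, hu3, hw,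
      polar_symm12 F w u, polar_symm23 F u w u] at hp
    rw [polar_symm23 F w w u, polar_symm12 F w u w] at hp
    apply mul_left_cancel₀ h3
    linear_combination hp
  by_contra hq
  set q := polar F u w w with hqdef
  have h6 : (6 : K) ≠ 0 := by
    have : (6 : K) = 2 * 3 := by norm_num
    rw [this]; exact mul_ne_zero h2 h3
  set s : K := - (polar F w w w) / (3 * q) with hs
  have hs' : 3 * q * s = - polar F w w w := by
    rw [hs]; field_simp
  have z : eval (w + s • u) F = 0 := by
    apply mul_left_cancel₀ h6
    rw [← polar_self h]
    simp only [map_add, map_smul, LinearMap.add_apply, LinearMap.smul_apply, smul_eq_mul,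
      hu3, hw, polar_symm12 F w u, polar_symm23 F u w u]
    rw [polar_symm23 F w w u, polar_symm12 F w u w, ← hqdef]
    linear_combination hs'
  have := key (w + s • u) (by simp [hw, hu3]) z
  simp only [map_add, map_smul, LinearMap.add_apply, LinearMap.smul_apply, smul_eq_mul,
      hu3, hw, polar_symm23 F u w u] at this
  apply hq
  linear_combination this

end Polar

/-- Let `K` be an algebraically closed field of characteristic greater
than 3, `n ≥ 4`, and `F` a cubic form in `n+1` variables with smooth zero locus
`X = V(F) ⊂ P^n`. Then `X` contains only finitely many Eckardt points: the set of
1-dimensional subspaces of `K^{n+1}` spanned by nonzero Eckardt vectors of `X` is finite. -/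
theorem stmt_14 (K : Type) [Field K] [IsAlgClosed K] (hchar : 3 < ringChar K)
    (n : ℕ) (hn : 4 ≤ n) (F : MvPolynomial (Fin (n + 1)) K)
    (hF : F ≠ 0) (hhom : F.IsHomogeneous 3)
    (hsmooth : ∀ v : Fin (n + 1) → K, v ≠ 0 → eval v F = 0 →
      ∃ i, eval v (pderiv i F) ≠ 0) :
    {L : Submodule K (Fin (n + 1) → K) | ∃ u : Fin (n + 1) → K,
      u ≠ 0 ∧ eval u F = 0 ∧ IsEckardtVec F u ∧ L = Submodule.span K {u}}.Finite := by
  have hc : ∀ k : ℕ, 0 < k → k ≤ 3 → ((k : ℕ) : K) ≠ 0 := by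
    intro k h0 hk h
    have := Nat.le_of_dvd h0 ((ringChar.spec K k).1 h)
    omega
  have h2 : (2 : K) ≠ 0 := by exact_mod_cast hc 2 (by norm_num) (by norm_num)
  have h3 : (3 : K) ≠ 0 := by exact_mod_cast hc 3 (by norm_num) (by norm_num)
  have hsm : ∀ v, v ≠ 0 → ∃ x, polar F v v x ≠ 0 := by
    intro v hv
    by_contra! h
    have h0 : eval v F = 0 := by
      have := h v
      rw [polar_self hhom] at this
      have h6 : (6 : K) = 2 * 3 := by norm_num
      rw [h6] at this
      exact (mul_eq_zero.1 this).resolve_left (mul_ne_zero h2 h3)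
    obtain ⟨i, hi⟩ := hsmooth v hv h0
    have := h (Pi.single i 1)
    rw [polar_grad hhom] at this
    simp [Pi.single_apply, h2, hi] at this
  refine (finite_axes (T := polar F) h2 h3 (polar_symm12 F) (polar_symm23 F) hsm).subset ?_
  rintro L ⟨u, hu0, huF, hE, rfl⟩
  obtain ⟨M, hM⟩ := exists_isAxis h2 (polar_symm23 F) (hsm u hu0)
    (by rw [polar_self hhom, huF, mul_zero]) (eckardt_vanish h2 h3 hhom huF hE)
  exact ⟨u, M, hM, rfl⟩
end
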